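/- arXiv:2211.17116 — 7 statements merged into one kernel-verified Lean document; each statement's English description precedes it below -/
import Mathlib

section
/- Suppose the tuple (Q_1,…,Q_n) of functions Q_i : S×A → ℝ is (ν,μ)-decay. Fix β ∈ ℕ and, for each i, nonnegative weights w(s_{N_{-i}^β}, a_{N_{-i}^β}; s_{N_i^β}, a_{N_i^β}) which, for each fixed (s_{N_i^β},a_{N_i^β}), sum to 1 over (s_{N_{-i}^β}, a_{N_{-i}^β}); define the truncated function Q̂_i(s_{N_i^β},a_{N_i^β}) = ∑_{s_{N_{-i}^β},a_{N_{-i}^β}} w(s_{N_{-i}^β},a_{N_{-i}^β}; s_{N_i^β},a_{N_i^β}) Q_i(s,a). Then for every i, sup_{s,a} |Q_i(s,a) − Q̂_i(s_{N_i^β},a_{N_i^β})| ≤ ν/(β+1)^μ. -/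
open scoped BigOperators

noncomputable section

namespace LPI

/-- A probability distribution on a finite type, represented as a nonnegative
function summing to one. -/
def IsDist {X : Type} [Fintype X] (d : X → ℝ) : Prop :=
  (∀ x, 0 ≤ d x) ∧ ∑ x, d x = 1

/-- Total variation distance between two finitely supported distributions. -/
def tv {X : Type} [Fintype X] (d d' : X → ℝ) : ℝ :=
  (1 / 2) * ∑ x, |d x - d' x|

/-- A `σ`-regular distribution: positive entries with log-ratios bounded by `σ`. -/
def IsRegularDist {X : Type} (σ : ℝ) (d : X → ℝ) : Prop :=
  (∀ x, 0 < d x) ∧ ∀ x y, Real.log (d x / d y) ≤ σ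

/-- A `(ν,μ)`-decay matrix with respect to a distance function. -/
def IsDecayMat {n : ℕ} (dist : Fin n → Fin n → ℕ) (ν μ : ℝ)
    (M : Fin n → Fin n → ℝ) : Prop :=
  (∀ i j, 0 ≤ M i j) ∧
  (∀ i, ∑ j, M i j * ((dist i j : ℝ) + 1) ^ μ ≤ ν) ∧
  (∀ j, ∑ i, M i j * ((dist i j : ℝ) + 1) ^ μ ≤ ν)

variable {n : ℕ} {S A : Fin n → Type}
variable [∀ i, Fintype (S i)] [∀ i, Fintype (A i)]
variable [∀ i, DecidableEq (S i)] [∀ i, DecidableEq (A i)]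
variable [∀ i, Nonempty (S i)] [∀ i, Nonempty (A i)]

/-- Probability that the joint policy `ζ` selects the joint action `a` in state `s`. -/
def jprob (ζ : ∀ i : Fin n, (∀ j, S j) → A i → ℝ)
    (s : ∀ j, S j) (a : ∀ i, A i) : ℝ :=
  ∏ i, ζ i s (a i)

/-- Product of a tuple of local action distributions. -/
def prodd (π : ∀ i : Fin n, A i → ℝ) (a : ∀ i, A i) : ℝ :=
  ∏ i, π i (a i)

/-- A joint policy: each agent's local conditional distribution is a distribution. -/
def IsPolicy (ζ : ∀ i : Fin n, (∀ j, S j) → A i → ℝ) : Prop :=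
  ∀ i s, IsDist (ζ i s)

/-- Local transition kernels are distributions. -/
def IsKernel (P : ∀ i : Fin n, (∀ j, S j) → A i → S i → ℝ) : Prop :=
  ∀ i s a, IsDist (P i s a)

/-- The local kernel of agent `i` depends only on the states of the closed
neighborhood `N_i` of `i`. -/
def IsLocalKernel (G : SimpleGraph (Fin n))
    (P : ∀ i : Fin n, (∀ j, S j) → A i → S i → ℝ) : Prop :=
  ∀ i : Fin n, ∀ s s' : ∀ j, S j,
    (∀ j, (j = i ∨ G.Adj i j) → s j = s' j) → ∀ a, P i s a = P i s' a

/-- Factorized global transition probability `P(s'|s,a) = ∏ i P_i(s'_i|s,a_i)`. -/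
def Pglob (P : ∀ i : Fin n, (∀ j, S j) → A i → S i → ℝ)
    (s : ∀ j, S j) (a : ∀ i, A i) (s' : ∀ j, S j) : ℝ :=
  ∏ i, P i s (a i) (s' i)

/-- Global stage reward `r(s,a) = (1/n) ∑ i r_i(s_i,a_i)`. -/
def rglob (r : ∀ i : Fin n, S i → A i → ℝ) (s : ∀ j, S j) (a : ∀ i, A i) : ℝ :=
  (1 / (n : ℝ)) * ∑ i, r i (s i) (a i)

/-- Transition matrix on global states induced by joint policy `ζ`. -/
def Pmat (P : ∀ i : Fin n, (∀ j, S j) → A i → S i → ℝ)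
    (ζ : ∀ i : Fin n, (∀ j, S j) → A i → ℝ) :
    Matrix (∀ j, S j) (∀ j, S j) ℝ :=
  Matrix.of fun s s' => ∑ a : ∀ i, A i, jprob ζ s a * Pglob P s a s'

/-- Entropy-regularized one-step reward of policy `ζ`. -/
def gz (τ : ℝ) (r : ∀ i : Fin n, S i → A i → ℝ)
    (ζ : ∀ i : Fin n, (∀ j, S j) → A i → ℝ) (s : ∀ j, S j) : ℝ :=
  ∑ a : ∀ i, A i, jprob ζ s a * (rglob r s a - τ * Real.log (jprob ζ s a))

/-- Entropy-regularized value function `V^ζ = ∑_t γ^t (P^ζ)^t g^ζ`. -/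
def Vz (γ τ : ℝ) (P : ∀ i : Fin n, (∀ j, S j) → A i → S i → ℝ)
    (r : ∀ i : Fin n, S i → A i → ℝ)
    (ζ : ∀ i : Fin n, (∀ j, S j) → A i → ℝ) : (∀ j, S j) → ℝ :=
  fun s => ∑' t : ℕ, γ ^ t * ((Pmat P ζ ^ t).mulVec (gz τ r ζ)) s

/-- Objective `J(ζ) = ∑_s ρ(s) V^ζ(s)`. -/
def Jobj (γ τ : ℝ) (P : ∀ i : Fin n, (∀ j, S j) → A i → S i → ℝ)
    (r : ∀ i : Fin n, S i → A i → ℝ)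
    (ζ : ∀ i : Fin n, (∀ j, S j) → A i → ℝ) (ρ : (∀ j, S j) → ℝ) : ℝ :=
  ∑ s, ρ s * Vz γ τ P r ζ s

/-- Entropy-regularized Bellman optimal operator. -/
def bellman (γ τ : ℝ) (P : ∀ i : Fin n, (∀ j, S j) → A i → S i → ℝ)
    (r : ∀ i : Fin n, S i → A i → ℝ)
    (V : (∀ j, S j) → ℝ) : (∀ j, S j) → ℝ :=
  fun s => sSup { x : ℝ | ∃ π : ∀ i : Fin n, A i → ℝ, (∀ i, IsDist (π i)) ∧
    x = ∑ a : ∀ i, A i, prodd π a *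
      (rglob r s a - τ * Real.log (prodd π a) +
        γ * ∑ s', Pglob P s a s' * V s') }

/-- Local entropy-regularized one-step reward of agent `i`. -/
def gzi (τ : ℝ) (r : ∀ i : Fin n, S i → A i → ℝ)
    (ζ : ∀ i : Fin n, (∀ j, S j) → A i → ℝ) (i : Fin n) (s : ∀ j, S j) : ℝ :=
  ∑ a : ∀ k, A k, jprob ζ s a *
    (r i (s i) (a i) - (n : ℝ) * τ * Real.log (ζ i s (a i)))

/-- Local value function `V_i^ζ`. -/
def Vzi (γ τ : ℝ) (P : ∀ i : Fin n, (∀ j, S j) → A i → S i → ℝ)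
    (r : ∀ i : Fin n, S i → A i → ℝ)
    (ζ : ∀ i : Fin n, (∀ j, S j) → A i → ℝ) (i : Fin n) : (∀ j, S j) → ℝ :=
  fun s => ∑' t : ℕ, γ ^ t * ((Pmat P ζ ^ t).mulVec (gzi τ r ζ i)) s

/-- Local Q-function `Q_i^ζ(s,a) = r_i(s_i,a_i) + γ ∑_{s'} P(s'|s,a) V_i^ζ(s')`. -/
def Qzi (γ τ : ℝ) (P : ∀ i : Fin n, (∀ j, S j) → A i → S i → ℝ)
    (r : ∀ i : Fin n, S i → A i → ℝ)
    (ζ : ∀ i : Fin n, (∀ j, S j) → A i → ℝ) (i : Fin n)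
    (s : ∀ j, S j) (a : ∀ k, A k) : ℝ :=
  r i (s i) (a i) + γ * ∑ s', Pglob P s a s' * Vzi γ τ P r ζ i s'

/-- Global Q-function `Q^ζ(s,a) = r(s,a) + γ ∑_{s'} P(s'|s,a) V^ζ(s')`. -/
def Qglob (γ τ : ℝ) (P : ∀ i : Fin n, (∀ j, S j) → A i → S i → ℝ)
    (r : ∀ i : Fin n, S i → A i → ℝ)
    (ζ : ∀ i : Fin n, (∀ j, S j) → A i → ℝ)
    (s : ∀ j, S j) (a : ∀ k, A k) : ℝ :=
  rglob r s a + γ * ∑ s', Pglob P s a s' * Vz γ τ P r ζ s'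

/-- Interaction matrix `Z^ζ` of a joint policy. -/
def Zpol (ζ : ∀ i : Fin n, (∀ j, S j) → A i → ℝ) (i j : Fin n) : ℝ :=
  ⨆ s : ∀ k, S k, ⨆ sj : S j, tv (ζ i s) (ζ i (Function.update s j sj))

/-- Interaction matrix `Z^Q` of a tuple of local Q-functions: varying the
state-action pair of a single agent `j`. -/
def ZQ (Q : Fin n → (∀ j, S j) → (∀ j, A j) → ℝ) (i j : Fin n) : ℝ :=
  ⨆ s : ∀ k, S k, ⨆ a : ∀ k, A k, ⨆ sj : S j, ⨆ aj : A j,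
    |Q i s a - Q i (Function.update s j sj) (Function.update a j aj)|

/-- Second-order interaction matrix `H^Q` of a global Q-function. -/
def HQ (Q : (∀ j, S j) → (∀ j, A j) → ℝ) (i j : Fin n) : ℝ :=
  ⨆ s : ∀ k, S k, ⨆ a : ∀ k, A k, ⨆ si : S i, ⨆ ai : A i, ⨆ sj : S j, ⨆ aj : A j,
    |(Q s a - Q (Function.update s i si) (Function.update a i ai)) -
      (Q (Function.update s j sj) (Function.update a j aj) -
        Q (Function.update (Function.update s i si) j sj)
          (Function.update (Function.update a i ai) j aj))|

/-- The matrix `C` measuring interaction strength of the transition kernels. -/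
def Cmat (G : SimpleGraph (Fin n)) [DecidableRel G.Adj]
    (P : ∀ i : Fin n, (∀ j, S j) → A i → S i → ℝ) (i j : Fin n) : ℝ :=
  if j = i then
    ⨆ s : ∀ k, S k, ⨆ si' : S i, ⨆ ai : A i, ⨆ ai' : A i,
      tv (P i s ai) (P i (Function.update s i si') ai')
  else if G.Adj i j then
    ⨆ s : ∀ k, S k, ⨆ sj' : S j, ⨆ ai : A i,
      tv (P i s ai) (P i (Function.update s j sj') ai)
  else 0

/-- A `σ`-regular joint policy. -/
def IsRegularPolicy (σ : ℝ) (ζ : ∀ i : Fin n, (∀ j, S j) → A i → ℝ) : Prop :=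
  ∀ i s, IsRegularDist σ (ζ i s)

/-- A `(ν,μ)`-decay joint policy. -/
def IsDecayPolicy (dist : Fin n → Fin n → ℕ) (ν μ : ℝ)
    (ζ : ∀ i : Fin n, (∀ j, S j) → A i → ℝ) : Prop :=
  IsDecayMat dist ν μ (Zpol ζ)

/-- The policy class `Δ_{ν,μ,σ}`. -/
def InDelta (dist : Fin n → Fin n → ℕ) (ν μ σ : ℝ)
    (ζ : ∀ i : Fin n, (∀ j, S j) → A i → ℝ) : Prop :=
  IsPolicy ζ ∧ IsDecayPolicy dist ν μ ζ ∧ IsRegularPolicy σ ζ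

/-- A `κ`-hop localized joint policy. -/
def IsKHop (G : SimpleGraph (Fin n)) (κ : ℕ)
    (ζ : ∀ i : Fin n, (∀ j, S j) → A i → ℝ) : Prop :=
  ∀ i : Fin n, ∀ s s' : ∀ j, S j,
    (∀ j, G.dist i j ≤ κ → s j = s' j) → ζ i s = ζ i s'

/-- The largest local action space cardinality `A_max`. -/
def Amax (A : Fin n → Type) [∀ i, Fintype (A i)] : ℕ :=
  Finset.univ.sup fun i => Fintype.card (A i)

/-- An irreducible stochastic matrix on a finite set. -/
def MatIrreducible {X : Type} [Fintype X] [DecidableEq X] (M : Matrix X X ℝ) : Prop :=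
  ∀ s s', ∃ t : ℕ, 1 ≤ t ∧ 0 < (M ^ t) s s'

/-- An aperiodic stochastic matrix: for each state `s`, the only common divisor
of the return times is `1` (i.e. `gcd {t ≥ 1 | (M^t)_{ss} > 0} = 1`). -/
def MatAperiodic {X : Type} [Fintype X] [DecidableEq X] (M : Matrix X X ℝ) : Prop :=
  ∀ s, ∀ d : ℕ, (∀ t : ℕ, 1 ≤ t → 0 < (M ^ t) s s → d ∣ t) → d = 1

/-- A stationary distribution of a transition matrix. -/
def IsStationary {X : Type} [Fintype X] (M : Matrix X X ℝ) (μ : X → ℝ) : Prop :=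
  IsDist μ ∧ Matrix.vecMul μ M = μ


/-- Changing one coordinate changes `Q i` by at most the interaction entry. -/
theorem aux_single {n : ℕ} (S A : Fin n → Type)
    [∀ i, Fintype (S i)] [∀ i, Fintype (A i)]
    (Q : Fin n → (∀ j, S j) → (∀ j, A j) → ℝ) (i j : Fin n)
    (s : ∀ j, S j) (a : ∀ j, A j) (sj : S j) (aj : A j) :
    |Q i s a - Q i (Function.update s j sj) (Function.update a j aj)| ≤ ZQ Q i j := by
  unfold ZQ
  refine le_trans ?_ (le_ciSup (Set.finite_range _).bddAbove s)
  refine le_trans ?_ (le_ciSup (Set.finite_range _).bddAbove a)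
  refine le_trans ?_ (le_ciSup (Set.finite_range _).bddAbove sj)
  exact le_ciSup (f := fun aj : A j =>
    |Q i s a - Q i (Function.update s j sj) (Function.update a j aj)|)
    (Set.finite_range _).bddAbove aj

/-- Telescoping over a finite set of coordinates. -/
theorem aux_tele {n : ℕ} (S A : Fin n → Type)
    [∀ i, Fintype (S i)] [∀ i, Fintype (A i)]
    (Q : Fin n → (∀ j, S j) → (∀ j, A j) → ℝ) (i : Fin n)
    (s s' : ∀ j, S j) (a a' : ∀ j, A j) (T : Finset (Fin n)) :
    |Q i s a - Q i (fun k => if k ∈ T then s' k else s k)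
      (fun k => if k ∈ T then a' k else a k)| ≤ ∑ j ∈ T, ZQ Q i j := by
  induction T using Finset.induction_on with
  | empty => simp
  | insert j T hj ih =>
    have h := aux_single S A Q i j (fun k => if k ∈ T then s' k else s k)
      (fun k => if k ∈ T then a' k else a k) (s' j) (a' j)
    have e1 : Function.update (fun k => if k ∈ T then s' k else s k) j (s' j)
        = fun k => if k ∈ insert j T then s' k else s k := by
      funext k
      by_cases hk : k = j
      · subst hk; simp
      · simp [Function.update_of_ne hk, hk]
    have e2 : Function.update (fun k => if k ∈ T then a' k else a k) j (a' j)
        = fun k => if k ∈ insert j T then a' k else a k := by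
      funext k
      by_cases hk : k = j
      · subst hk; simp
      · simp [Function.update_of_ne hk, hk]
    rw [e1, e2] at h
    rw [Finset.sum_insert hj]
    have := abs_sub_le (Q i s a) (Q i (fun k => if k ∈ T then s' k else s k)
      (fun k => if k ∈ T then a' k else a k))
      (Q i (fun k => if k ∈ insert j T then s' k else s k)
        (fun k => if k ∈ insert j T then a' k else a k))
    linarith

/-- if the tuple `(Q_1,…,Q_n)` is `(ν,μ)`-decay, then any `β`-hop truncation
`Q̂_i` of `Q_i` — a weighted average, with weights summing to one, of the values of `Q_i`
over state-action configurations agreeing with `(s,a)` on the `β`-hop neighborhood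
`N_i^β` of `i` — satisfies `sup_{s,a} |Q_i(s,a) − Q̂_i(s_{N_i^β},a_{N_i^β})| ≤ ν/(β+1)^μ`. -/
theorem stmt_2 {n : ℕ} (G : SimpleGraph (Fin n))
    (S A : Fin n → Type)
    [∀ i, Fintype (S i)] [∀ i, Fintype (A i)]
    [∀ i, DecidableEq (S i)] [∀ i, DecidableEq (A i)]
    [∀ i, Nonempty (S i)] [∀ i, Nonempty (A i)]
    (Q : Fin n → (∀ j, S j) → (∀ j, A j) → ℝ)
    (ν μ : ℝ) (hν : 0 < ν) (hμ : 0 < μ)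
    (hQ : IsDecayMat (fun i j => G.dist i j) ν μ (ZQ Q))
    (β : ℕ)
    (w : ∀ _ : Fin n, (∀ j, S j) → (∀ j, A j) → (∀ j, S j) → (∀ j, A j) → ℝ)
    (hw0 : ∀ i s a s' a', 0 ≤ w i s a s' a')
    (hw1 : ∀ i s a, ∑ s' : ∀ j, S j, ∑ a' : ∀ j, A j, w i s a s' a' = 1) :
    ∀ (i : Fin n) (s : ∀ j, S j) (a : ∀ j, A j),
      |Q i s a -
        ∑ s' : ∀ j, S j, ∑ a' : ∀ j, A j, w i s a s' a' *
          Q i (fun k => if G.dist i k ≤ β then s k else s' k)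
              (fun k => if G.dist i k ≤ β then a k else a' k)| ≤
        ν / ((β : ℝ) + 1) ^ μ := by
  intro i s a
  have hb : (0 : ℝ) < ((β : ℝ) + 1) ^ μ := by positivity
  have key : ∀ (s' : ∀ j, S j) (a' : ∀ j, A j),
      |Q i s a - Q i (fun k => if G.dist i k ≤ β then s k else s' k)
        (fun k => if G.dist i k ≤ β then a k else a' k)| ≤ ν / ((β : ℝ) + 1) ^ μ := by
    intro s' a'
    have h := aux_tele S A Q i s s' a a' (Finset.univ.filter fun k => ¬ G.dist i k ≤ β)
    simp only [Finset.mem_filter, Finset.mem_univ, true_and, ite_not] at h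
    refine h.trans ?_
    rw [le_div_iff₀ hb, Finset.sum_mul]
    refine le_trans ?_ (hQ.2.1 i)
    refine le_trans (Finset.sum_le_sum
      (g := fun j => ZQ Q i j * ((G.dist i j : ℝ) + 1) ^ μ) ?_) ?_
    · intro j hj
      have hj' : β ≤ G.dist i j := by
        have := (Finset.mem_filter.1 hj).2
        omega
      have hj2 : (β : ℝ) ≤ (G.dist i j : ℝ) := by exact_mod_cast hj'
      refine mul_le_mul_of_nonneg_left ?_ (hQ.1 i j)
      exact Real.rpow_le_rpow (by positivity) (by linarith) hμ.le
    · refine Finset.sum_le_sum_of_subset_of_nonneg (Finset.filter_subset _ _) ?_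
      intro j _ _
      exact mul_nonneg (hQ.1 i j) (by positivity)
  have e : Q i s a = ∑ s' : ∀ j, S j, ∑ a' : ∀ j, A j, w i s a s' a' * Q i s a := by
    simp_rw [← Finset.sum_mul]
    rw [hw1, one_mul]
  have e' : ν / ((β : ℝ) + 1) ^ μ = ∑ s' : ∀ j, S j, ∑ a' : ∀ j, A j,
      w i s a s' a' * (ν / ((β : ℝ) + 1) ^ μ) := by
    simp_rw [← Finset.sum_mul]
    rw [hw1, one_mul]
  rw [e', e]
  simp_rw [← Finset.sum_sub_distrib, ← mul_sub]
  refine (Finset.abs_sum_le_sum_abs _ _).trans (Finset.sum_le_sum fun s' _ => ?_)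
  refine (Finset.abs_sum_le_sum_abs _ _).trans (Finset.sum_le_sum fun a' _ => ?_)
  rw [abs_mul, abs_of_nonneg (hw0 i s a s' a')]
  exact mul_le_mul_of_nonneg_left (key s' a') (hw0 i s a s' a')

end LPI
end
end

section
/- Suppose γ < 0.8, τ ≥ 6 r̄ A_max² e (4−3γ)/(4−5γ), and ∑_{j∈N_i} C_{ij} < 1/2 for every i ∈ {1,…,n}. Let μ = min( log₂( τ(4−5γ) / (6 r̄ A_max² e (4−3γ)) ), log₂( 1 / (2 max_{i} ∑_{j∈N_i} C_{ij}) ) ). Then for every κ ∈ ℕ there exists a κ-hop joint policy ζ̂ such that for every joint policy ζ, J(ζ) − J(ζ̂) ≤ ( r̄ (4−3γ) / ((1−γ)(4−5γ)) ) · 1/(κ+1)^μ. -/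
open scoped BigOperators

noncomputable section

namespace LPI

variable {n : ℕ} {S A : Fin n → Type}
variable [∀ i, Fintype (S i)] [∀ i, Fintype (A i)]
variable [∀ i, DecidableEq (S i)] [∀ i, DecidableEq (A i)]
variable [∀ i, Nonempty (S i)] [∀ i, Nonempty (A i)]

set_option linter.unusedSectionVars false
/-- Expectation under a product distribution. -/
def EE {X : Fin n → Type} [∀ i, Fintype (X i)] (p : ∀ i, X i → ℝ)
    (f : (∀ i, X i) → ℝ) : ℝ := ∑ x, (∏ i, p i (x i)) * f x

section toolkit

variable {X : Fin n → Type} [∀ i, Fintype (X i)] [∀ i, DecidableEq (X i)]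

theorem sum_prod_eq (p : ∀ i, X i → ℝ) :
    ∑ x : ∀ i, X i, ∏ i, p i (x i) = ∏ i, ∑ y, p i y := by
  rw [Finset.prod_univ_sum]
  simp [Fintype.piFinset_univ]

theorem EE_const {p : ∀ i, X i → ℝ} (hp : ∀ i, IsDist (p i)) (c : ℝ) :
    EE p (fun _ => c) = c := by
  unfold EE
  rw [← Finset.sum_mul, sum_prod_eq, Finset.prod_congr rfl (fun i _ => (hp i).2)]
  simp

theorem EE_weight_nonneg {p : ∀ i, X i → ℝ} (hp : ∀ i, IsDist (p i)) (x : ∀ i, X i) :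
    0 ≤ ∏ i, p i (x i) := Finset.prod_nonneg fun i _ => (hp i).1 _

theorem EE_mono {p : ∀ i, X i → ℝ} (hp : ∀ i, IsDist (p i)) {f g : (∀ i, X i) → ℝ}
    (h : ∀ x, f x ≤ g x) : EE p f ≤ EE p g :=
  Finset.sum_le_sum fun x _ => mul_le_mul_of_nonneg_left (h x) (EE_weight_nonneg hp x)

theorem EE_add (p : ∀ i, X i → ℝ) (f g : (∀ i, X i) → ℝ) :
    EE p (fun x => f x + g x) = EE p f + EE p g := by
  simp [EE, mul_add, Finset.sum_add_distrib]

theorem EE_smul (p : ∀ i, X i → ℝ) (c : ℝ) (f : (∀ i, X i) → ℝ) :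
    EE p (fun x => c * f x) = c * EE p f := by
  simp only [EE, Finset.mul_sum]
  exact Finset.sum_congr rfl fun x _ => by ring

theorem EE_sum {ι : Type} (t : Finset ι) (p : ∀ i, X i → ℝ) (f : ι → (∀ i, X i) → ℝ) :
    EE p (fun x => ∑ k ∈ t, f k x) = ∑ k ∈ t, EE p (f k) := by
  simp only [EE, Finset.mul_sum]
  rw [Finset.sum_comm]

theorem EE_abs_le {p : ∀ i, X i → ℝ} (hp : ∀ i, IsDist (p i)) {f : (∀ i, X i) → ℝ} {c : ℝ}
    (h : ∀ x, |f x| ≤ c) : |EE p f| ≤ c := by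
  rw [abs_le]
  constructor
  · rw [← EE_const hp (-c)]
    exact EE_mono hp fun x => (abs_le.1 (h x)).1
  · rw [← EE_const hp c]
    exact EE_mono hp fun x => (abs_le.1 (h x)).2

/-- Marginal expectation. -/
theorem EE_marg {p : ∀ i, X i → ℝ} (hp : ∀ i, IsDist (p i)) (i : Fin n) (h : X i → ℝ) :
    EE p (fun x => h (x i)) = ∑ y, p i y * h y := by
  have h1 : ∀ x : ∀ i, X i, (∏ j, p j (x j)) * h (x i) =
      ∏ j, (Function.update p i (fun y => p i y * h y)) j (x j) := by
    intro x
    rw [← Finset.mul_prod_erase _ _ (Finset.mem_univ i),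
      ← Finset.mul_prod_erase _ _ (Finset.mem_univ i)]
    rw [Function.update_self]
    have : ∏ j ∈ Finset.univ.erase i, (Function.update p i (fun y => p i y * h y)) j (x j)
        = ∏ j ∈ Finset.univ.erase i, p j (x j) := by
      apply Finset.prod_congr rfl
      intro j hj
      rw [Function.update_of_ne (Finset.ne_of_mem_erase hj)]
    rw [this]; ring
  unfold EE
  rw [Finset.sum_congr rfl (fun x _ => h1 x), sum_prod_eq,
    ← Finset.mul_prod_erase _ _ (Finset.mem_univ i), Function.update_self]
  have : ∏ j ∈ Finset.univ.erase i, ∑ y, (Function.update p i (fun y => p i y * h y)) j y = 1 := by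
    apply Finset.prod_eq_one
    intro j hj
    rw [Function.update_of_ne (Finset.ne_of_mem_erase hj)]
    exact (hp j).2
  rw [this, mul_one]

/-- Point mass. -/
def pt {Y : Type} [DecidableEq Y] (a : Y) : Y → ℝ := fun b => if b = a then 1 else 0

theorem pt_dist {Y : Type} [Fintype Y] [DecidableEq Y] (a : Y) : IsDist (pt a) := by
  constructor
  · intro x; unfold pt; split_ifs <;> norm_num
  · simp [pt]

theorem upd_dist {p : ∀ i, X i → ℝ} (hp : ∀ i, IsDist (p i)) (i : Fin n) {σ : X i → ℝ}
    (hσ : IsDist σ) : ∀ j, IsDist (Function.update p i σ j) := by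
  intro j
  by_cases h : j = i
  · subst h; simpa using hσ
  · rw [Function.update_of_ne h]; exact hp j

/-- Multi-affinity. -/
theorem EE_update (p : ∀ i, X i → ℝ) (i : Fin n) (σ : X i → ℝ) (f : (∀ i, X i) → ℝ) :
    EE (Function.update p i σ) f = ∑ a, σ a * EE (Function.update p i (pt a)) f := by
  have key : ∀ (ρ : X i → ℝ) (x : ∀ i, X i), ∏ j, (Function.update p i ρ) j (x j) =
      ρ (x i) * ∏ j ∈ Finset.univ.erase i, p j (x j) := by
    intro ρ x
    rw [← Finset.mul_prod_erase _ _ (Finset.mem_univ i), Function.update_self]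
    congr 1
    apply Finset.prod_congr rfl
    intro j hj
    rw [Function.update_of_ne (Finset.ne_of_mem_erase hj)]
  unfold EE
  simp only [key, Finset.mul_sum]
  rw [Finset.sum_comm]
  apply Finset.sum_congr rfl
  intro x _
  simp [pt]
  ring

theorem tv_nonneg {Y : Type} [Fintype Y] (p q : Y → ℝ) : 0 ≤ tv p q := by
  unfold tv; positivity

theorem tv_comm {Y : Type} [Fintype Y] (p q : Y → ℝ) : tv p q = tv q p := by
  unfold tv; simp only [abs_sub_comm]

theorem tv_self {Y : Type} [Fintype Y] (p : Y → ℝ) : tv p p = 0 := by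
  simp [tv]

theorem tv_triangle {Y : Type} [Fintype Y] (p q r : Y → ℝ) : tv p r ≤ tv p q + tv q r := by
  unfold tv
  rw [← mul_add, ← Finset.sum_add_distrib]
  apply mul_le_mul_of_nonneg_left _ (by norm_num)
  exact Finset.sum_le_sum fun x _ => abs_sub_le _ _ _

theorem tv_le_one {Y : Type} [Fintype Y] {p q : Y → ℝ} (hp : IsDist p) (hq : IsDist q) :
    tv p q ≤ 1 := by
  unfold tv
  have : ∑ x, |p x - q x| ≤ ∑ x, (p x + q x) := by
    apply Finset.sum_le_sum
    intro x _
    rw [abs_le]; constructor <;> linarith [hp.1 x, hq.1 x]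
  rw [Finset.sum_add_distrib, hp.2, hq.2] at this
  linarith

/-- Maximal coupling of two distributions. -/
theorem exists_coupling {Y : Type} [Fintype Y] [DecidableEq Y] {p q : Y → ℝ}
    (hp : IsDist p) (hq : IsDist q) :
    ∃ c : Y → Y → ℝ, (∀ x y, 0 ≤ c x y) ∧ (∀ x, ∑ y, c x y = p x) ∧ (∀ y, ∑ x, c x y = q y) ∧
      ∑ x, ∑ y, c x y * (if x ≠ y then 1 else 0) ≤ tv p q := by
  set m : Y → ℝ := fun x => min (p x) (q x) with hm
  set t : ℝ := 1 - ∑ x, m x with ht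
  have habs : ∀ x, |p x - q x| = p x + q x - 2 * m x := by
    intro x
    simp only [hm]
    rcases le_total (p x) (q x) with h | h
    · rw [min_eq_left h, abs_of_nonpos (by linarith)]; ring
    · rw [min_eq_right h, abs_of_nonneg (by linarith)]; ring
  have htv : tv p q = t := by
    unfold tv
    simp only [habs]
    rw [Finset.sum_sub_distrib, Finset.sum_add_distrib, hp.2, hq.2, ← Finset.mul_sum, ht]; ring
  have hsp : ∑ x, (p x - m x) = t := by rw [Finset.sum_sub_distrib, hp.2]
  have hsq : ∑ x, (q x - m x) = t := by rw [Finset.sum_sub_distrib, hq.2]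
  have hpm : ∀ x, 0 ≤ p x - m x := fun x => sub_nonneg.2 (min_le_left _ _)
  have hqm : ∀ x, 0 ≤ q x - m x := fun x => sub_nonneg.2 (min_le_right _ _)
  have htn : 0 ≤ t := by rw [← htv]; exact tv_nonneg _ _
  have hcan : ∀ z : ℝ, (t = 0 → z = 0) → z * t / t = z := by
    intro z hz
    by_cases h : t = 0
    · rw [hz h]; simp
    · field_simp
  have hz1 : ∀ x, t = 0 → p x - m x = 0 := by
    intro x h
    rw [h] at hsp
    exact (Finset.sum_eq_zero_iff_of_nonneg (fun x _ => hpm x)).1 hsp x (Finset.mem_univ x)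
  have hz2 : ∀ x, t = 0 → q x - m x = 0 := by
    intro x h
    rw [h] at hsq
    exact (Finset.sum_eq_zero_iff_of_nonneg (fun x _ => hqm x)).1 hsq x (Finset.mem_univ x)
  refine ⟨fun x y => (if x = y then m x else 0) + (p x - m x) * (q y - m y) / t, ?_, ?_, ?_, ?_⟩
  · intro x y
    have h1 : 0 ≤ m x := le_min (hp.1 x) (hq.1 x)
    have h2 := hpm x
    have h3 := hqm y
    have : 0 ≤ (if x = y then m x else 0) := by split_ifs <;> simp [h1]
    positivity
  · intro x
    rw [Finset.sum_add_distrib, ← Finset.sum_div, ← Finset.mul_sum, hsq, hcan _ (hz1 x)]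
    simp
  · intro y
    rw [Finset.sum_add_distrib, ← Finset.sum_div, ← Finset.sum_mul, hsp, mul_comm, hcan _ (hz2 y)]
    simp
  · calc _ ≤ ∑ x, ∑ y, (p x - m x) * (q y - m y) / t := by
          apply Finset.sum_le_sum; intro x _
          apply Finset.sum_le_sum; intro y _
          have : 0 ≤ (p x - m x) * (q y - m y) / t :=
            div_nonneg (mul_nonneg (hpm x) (hqm y)) htn
          by_cases h : x = y
          · simp [h]; rw [← h]; simpa [h] using this
          · simp [h]
      _ = tv p q := by
          simp only [← Finset.sum_div, ← Finset.mul_sum, ← Finset.sum_mul, hsp, hsq]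
          rw [hcan t (fun h => h), htv]

/-- Coupling lemma for product distributions. -/
theorem EE_couple {p q : ∀ i, X i → ℝ} (hp : ∀ i, IsDist (p i)) (hq : ∀ i, IsDist (q i))
    {f g : (∀ i, X i) → ℝ} {c : ℝ} {α : Fin n → ℝ} (hα : ∀ j, 0 ≤ α j)
    (h : ∀ x y, f x - g y ≤ c + ∑ j, α j * (if x j ≠ y j then 1 else 0)) :
    EE p f - EE q g ≤ c + ∑ j, α j * tv (p j) (q j) := by
  choose k hk0 hk1 hk2 hk3 using fun i => exists_coupling (hp i) (hq i)
  let K : ∀ i, (X i × X i) → ℝ := fun i z => k i z.1 z.2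
  have hKd : ∀ i, IsDist (K i) := by
    intro i
    refine ⟨fun z => hk0 i _ _, ?_⟩
    rw [Fintype.sum_prod_type]
    simp only [K, hk1]
    exact (hp i).2
  let e : (∀ i, X i × X i) ≃ (∀ i, X i) × (∀ i, X i) :=
    ⟨fun z => (fun i => (z i).1, fun i => (z i).2), fun w i => (w.1 i, w.2 i),
      fun _ => rfl, fun _ => rfl⟩
  have conv : ∀ F : (∀ i, X i) → (∀ i, X i) → ℝ,
      EE K (fun z => F (fun i => (z i).1) (fun i => (z i).2)) =
        ∑ x : ∀ i, X i, ∑ y : ∀ i, X i, (∏ i, k i (x i) (y i)) * F x y := by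
    intro F
    rw [← Fintype.sum_prod_type']
    unfold EE
    exact Fintype.sum_equiv e _ _ (fun z => rfl)
  have hf : EE p f = EE K (fun z => f (fun i => (z i).1)) := by
    rw [conv (fun x _ => f x)]
    unfold EE
    apply Finset.sum_congr rfl
    intro x _
    rw [← Finset.sum_mul, sum_prod_eq (fun i y => k i (x i) y)]
    simp only [hk1]
  have hg : EE q g = EE K (fun z => g (fun i => (z i).2)) := by
    rw [conv (fun _ y => g y), Finset.sum_comm]
    unfold EE
    apply Finset.sum_congr rfl
    intro y _
    rw [← Finset.sum_mul, sum_prod_eq (fun i x => k i x (y i))]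
    simp only [hk2]
  have hE : EE K (fun z => f (fun i => (z i).1)) ≤
      EE K (fun z => g (fun i => (z i).2) +
        (c + ∑ j, α j * (if (z j).1 ≠ (z j).2 then 1 else 0))) := by
    apply EE_mono hKd
    intro z
    linarith [h (fun i => (z i).1) (fun i => (z i).2)]
  rw [EE_add, EE_add, EE_const hKd, EE_sum] at hE
  have hj : ∀ j, EE K (fun z => α j * (if (z j).1 ≠ (z j).2 then 1 else 0)) ≤
      α j * tv (p j) (q j) := by
    intro j
    rw [EE_smul, EE_marg hKd j (fun z => if z.1 ≠ z.2 then 1 else 0), Fintype.sum_prod_type]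
    exact mul_le_mul_of_nonneg_left (hk3 j) (hα j)
  have := Finset.sum_le_sum (fun j (_ : j ∈ Finset.univ) => hj j)
  rw [hf, hg]
  linarith

end toolkit

/-- Entropy of a local distribution. -/
def Hent {Y : Type} [Fintype Y] (p : Y → ℝ) : ℝ := ∑ y, Real.negMulLog (p y)

/-- Regularized one-step objective of a tuple of local distributions. -/
def Fobj (τ : ℝ) (Q : (∀ i, A i) → ℝ) (π : ∀ i, A i → ℝ) : ℝ :=
  EE π Q + τ * ∑ i, Hent (π i)

theorem exists_max (τ : ℝ) (Q : (∀ i, A i) → ℝ) :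
    ∃ π : ∀ i, A i → ℝ, (∀ i, IsDist (π i)) ∧
      ∀ σ : ∀ i, A i → ℝ, (∀ i, IsDist (σ i)) → Fobj τ Q σ ≤ Fobj τ Q π := by
  have hcomp : IsCompact (Set.univ.pi fun i => stdSimplex ℝ (A i)) :=
    isCompact_univ_pi fun i => isCompact_stdSimplex ℝ (A i)
  have hne : (Set.univ.pi fun i => stdSimplex ℝ (A i)).Nonempty := by
    refine ⟨fun i => pt (Classical.arbitrary (A i)), fun i _ => ?_⟩
    exact pt_dist _
  have hcont : Continuous (Fobj τ Q) := by
    unfold Fobj EE Hent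
    have h1 : Continuous fun x : (∀ i, A i → ℝ) => ∑ x_1 : ∀ i, A i, (∏ i, x i (x_1 i)) * Q x_1 := by
      fun_prop
    have h2 : Continuous fun x : (∀ i, A i → ℝ) => ∑ i, ∑ y, Real.negMulLog (x i y) := by
      refine continuous_finsetSum _ fun i _ => continuous_finsetSum _ fun y _ => ?_
      exact Real.continuous_negMulLog.comp (by fun_prop)
    exact h1.add (h2.const_mul τ) |>.congr fun _ => rfl
  obtain ⟨π, hπ, hmax⟩ := hcomp.exists_isMaxOn hne hcont.continuousOn
  refine ⟨π, fun i => hπ i (Set.mem_univ i), fun σ hσ => hmax fun i _ => hσ i⟩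

/-- A chosen maximizer. -/
def opt (τ : ℝ) (Q : (∀ i, A i) → ℝ) : ∀ i, A i → ℝ := Classical.choose (exists_max τ Q)

theorem opt_dist (τ : ℝ) (Q : (∀ i, A i) → ℝ) : ∀ i, IsDist (opt τ Q i) :=
  (Classical.choose_spec (exists_max τ Q)).1

theorem opt_max (τ : ℝ) (Q : (∀ i, A i) → ℝ) (σ : ∀ i, A i → ℝ) (hσ : ∀ i, IsDist (σ i)) :
    Fobj τ Q σ ≤ Fobj τ Q (opt τ Q) :=
  (Classical.choose_spec (exists_max τ Q)).2 σ hσ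

/-- Maximal value. -/
def Mval (τ : ℝ) (Q : (∀ i, A i) → ℝ) : ℝ := Fobj τ Q (opt τ Q)

theorem Fobj_add_const (τ : ℝ) (Q : (∀ i, A i) → ℝ) (c : ℝ) (π : ∀ i, A i → ℝ)
    (hπ : ∀ i, IsDist (π i)) : Fobj τ (fun a => Q a + c) π = Fobj τ Q π + c := by
  unfold Fobj
  rw [EE_add π Q (fun _ => c), EE_const hπ]; ring

theorem Mval_lip (τ : ℝ) {Q Q' : (∀ i, A i) → ℝ} {c : ℝ} (h : ∀ a, Q a ≤ Q' a + c) :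
    Mval τ Q ≤ Mval τ Q' + c := by
  have h1 : Fobj τ Q (opt τ Q) ≤ Fobj τ (fun a => Q' a + c) (opt τ Q) := by
    unfold Fobj
    have := EE_mono (opt_dist τ Q) h
    linarith
  rw [Fobj_add_const _ _ _ _ (opt_dist τ Q)] at h1
  have := opt_max τ Q' _ (opt_dist τ Q)
  unfold Mval
  linarith

theorem Mval_add_const (τ : ℝ) (Q : (∀ i, A i) → ℝ) (c : ℝ) :
    Mval τ (fun a => Q a + c) = Mval τ Q + c := by
  apply le_antisymm
  · exact Mval_lip τ fun a => le_refl _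
  · have := Mval_lip τ (Q := Q) (Q' := fun a => Q a + c) (c := -c) fun a => by linarith
    linarith

/-- Gibbs inequality. -/
theorem gibbs {Y : Type} [Fintype Y] {p q : Y → ℝ} (hp : IsDist p) (hq : IsDist q)
    (hqpos : ∀ y, 0 < q y) : Hent p ≤ - ∑ y, p y * Real.log (q y) := by
  have h : ∀ y, Real.negMulLog (p y) + p y * Real.log (q y) ≤ q y - p y := by
    intro y
    rcases (hp.1 y).eq_or_lt with h0 | h0
    · rw [← h0]; simp [(hqpos y).le]
    · have := Real.log_le_sub_one_of_pos (div_pos (hqpos y) h0)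
      rw [Real.log_div (hqpos y).ne' h0.ne'] at this
      have h2 := mul_le_mul_of_nonneg_left this h0.le
      have h3 : p y * (q y / p y - 1) = q y - p y := by field_simp
      unfold Real.negMulLog
      nlinarith
  have := Finset.sum_le_sum fun y (_ : y ∈ Finset.univ) => h y
  rw [Finset.sum_add_distrib, Finset.sum_sub_distrib, hp.2, hq.2] at this
  unfold Hent
  linarith

/-- Equality case of the Gibbs inequality. -/
theorem gibbs_eq {Y : Type} [Fintype Y] {p q : Y → ℝ} (hp : IsDist p) (hq : IsDist q)
    (hqpos : ∀ y, 0 < q y) (h : - ∑ y, p y * Real.log (q y) ≤ Hent p) : p = q := by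
  have hk : ∀ y, q y * InformationTheory.klFun (p y / q y) =
      p y * Real.log (p y) - p y * Real.log (q y) + q y - p y := by
    intro y
    have hqy := (hqpos y).ne'
    unfold InformationTheory.klFun
    rcases (hp.1 y).eq_or_lt with h0 | h0
    · rw [← h0]; simp
    · rw [Real.log_div h0.ne' hqy]; field_simp
  have hn : ∀ y ∈ Finset.univ, 0 ≤ q y * InformationTheory.klFun (p y / q y) := fun y _ =>
    mul_nonneg (hqpos y).le
      (InformationTheory.klFun_nonneg (div_nonneg (hp.1 y) (hqpos y).le))
  have hs : ∑ y, q y * InformationTheory.klFun (p y / q y) ≤ 0 := by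
    simp only [hk]
    rw [Finset.sum_sub_distrib, Finset.sum_add_distrib, Finset.sum_sub_distrib, hp.2, hq.2]
    unfold Hent Real.negMulLog at h
    simp only [neg_mul, Finset.sum_neg_distrib] at h
    linarith
  have hz := (Finset.sum_eq_zero_iff_of_nonneg hn).1 (le_antisymm hs (Finset.sum_nonneg hn))
  funext y
  have h1 := hz y (Finset.mem_univ y)
  rcases mul_eq_zero.1 h1 with h2 | h2
  · exact absurd h2 (hqpos y).ne'
  · rw [InformationTheory.klFun_eq_zero_iff (div_nonneg (hp.1 y) (hqpos y).le)] at h2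
    field_simp [(hqpos y).ne'] at h2
    exact h2

theorem Fobj_update (τ : ℝ) (Q : (∀ i, A i) → ℝ) (π : ∀ i, A i → ℝ) (i : Fin n) (σ : A i → ℝ) :
    Fobj τ Q (Function.update π i σ) =
      ∑ a, σ a * EE (Function.update π i (pt a)) Q + τ * Hent σ +
        τ * ∑ j ∈ Finset.univ.erase i, Hent (π j) := by
  unfold Fobj
  rw [EE_update, ← Finset.add_sum_erase _ _ (Finset.mem_univ i), Function.update_self]
  have : ∑ j ∈ Finset.univ.erase i, Hent (Function.update π i σ j) =
      ∑ j ∈ Finset.univ.erase i, Hent (π j) := by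
    apply Finset.sum_congr rfl
    intro j hj
    rw [Function.update_of_ne (Finset.ne_of_mem_erase hj)]
  rw [this]; ring

/-- Softmax characterization of the maximizer. -/
theorem opt_softmax {τ : ℝ} (hτ : 0 < τ) (Q : (∀ i, A i) → ℝ) (i : Fin n) :
    (∀ a, 0 < opt τ Q i a) ∧ ∀ a b, τ * (Real.log (opt τ Q i a) - Real.log (opt τ Q i b)) =
      EE (Function.update (opt τ Q) i (pt a)) Q - EE (Function.update (opt τ Q) i (pt b)) Q := by
  set π := opt τ Q with hπ
  set q : A i → ℝ := fun a => EE (Function.update π i (pt a)) Q with hq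
  set Z : ℝ := ∑ a, Real.exp (q a / τ) with hZ
  have hZpos : 0 < Z := Finset.sum_pos (fun a _ => Real.exp_pos _) Finset.univ_nonempty
  set p : A i → ℝ := fun a => Real.exp (q a / τ) / Z with hp
  have hppos : ∀ a, 0 < p a := fun a => div_pos (Real.exp_pos _) hZpos
  have hpd : IsDist p := by
    refine ⟨fun a => (hppos a).le, ?_⟩
    simp only [hp]
    rw [← Finset.sum_div, div_self hZpos.ne']
  have hlog : ∀ a, τ * Real.log (p a) = q a - τ * Real.log Z := by
    intro a
    simp only [hp]
    rw [Real.log_div (Real.exp_pos _).ne' hZpos.ne', Real.log_exp]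
    field_simp
  have hπd := opt_dist τ Q
  have hmax := opt_max τ Q (Function.update π i p) (upd_dist hπd i hpd)
  have hself : Fobj τ Q π = Fobj τ Q (Function.update π i (π i)) := by
    rw [Function.update_eq_self]
  rw [← hπ, hself, Fobj_update, Fobj_update] at hmax
  have hid : ∀ σ : A i → ℝ, IsDist σ → ∑ a, σ a * q a =
      τ * ∑ a, σ a * Real.log (p a) + τ * Real.log Z := by
    intro σ hσ
    have : ∀ a, σ a * q a = τ * (σ a * Real.log (p a)) + σ a * (τ * Real.log Z) := by
      intro a
      have := hlog a
      linear_combination (-σ a) * this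
    simp only [this]
    rw [Finset.sum_add_distrib, ← Finset.mul_sum, ← Finset.sum_mul, hσ.2, one_mul]
  have hHp : Hent p = - ∑ a, p a * Real.log (p a) := by
    simp [Hent, Real.negMulLog]
  have e1 := hid p hpd
  have e2 := hid (π i) (hπd i)
  simp only [hq] at e1 e2
  rw [e1, e2, hHp] at hmax
  have heq : π i = p := by
    apply gibbs_eq (hπd i) hpd hppos
    have : 0 ≤ τ * (Hent (π i) + ∑ a, π i a * Real.log (p a)) := by linarith
    have := nonneg_of_mul_nonneg_right this hτ
    linarith
  rw [heq]
  refine ⟨hppos, fun a b => ?_⟩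
  rw [mul_sub, hlog, hlog]
  simp only [hq]
  ring

/-- Total variation from log-ratio oscillation. -/
theorem tv_le_of_log {Y : Type} [Fintype Y] {p q : Y → ℝ} (hp : IsDist p) (hq : IsDist q)
    (hp0 : ∀ y, 0 < p y) (hq0 : ∀ y, 0 < q y) {o : ℝ}
    (h : ∀ a b, (Real.log (p a) - Real.log (q a)) - (Real.log (p b) - Real.log (q b)) ≤ o) :
    tv p q ≤ o := by
  have key : ∀ {p q : Y → ℝ}, IsDist p → IsDist q → (∀ y, 0 < p y) → (∀ y, 0 < q y) →
      (∀ a b, (Real.log (p a) - Real.log (q a)) - (Real.log (p b) - Real.log (q b)) ≤ o) →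
      ∀ a, p a - q a ≤ o * p a := by
    intro p q hp hq hp0 hq0 h a
    obtain ⟨b, hb⟩ : ∃ b, p b ≤ q b := by
      by_contra hcon
      push Not at hcon
      have := Finset.sum_lt_sum_of_nonempty (s := Finset.univ) ⟨a, Finset.mem_univ a⟩
        (fun b _ => hcon b)
      rw [hp.2, hq.2] at this
      exact lt_irrefl _ this
    have h1 := h a b
    have h2 := Real.log_le_log (hp0 b) hb
    have h3 : Real.log (p a / q a) ≤ o := by
      rw [Real.log_div (hp0 a).ne' (hq0 a).ne']; linarith
    have h4 : 1 - (p a / q a)⁻¹ ≤ o :=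
      (Real.one_sub_inv_le_log_of_pos (div_pos (hp0 a) (hq0 a))).trans h3
    have h5 := mul_le_mul_of_nonneg_right h4 (hp0 a).le
    have h6 : (1 - (p a / q a)⁻¹) * p a = p a - q a := by
      have := (hp0 a).ne'
      have := (hq0 a).ne'
      field_simp
    linarith
  have k1 := key hp hq hp0 hq0 h
  have k2 := key hq hp hq0 hp0 (fun a b => by linarith [h b a])
  have ho : ∀ a : Y, 0 ≤ o := fun a => by have := h a a; linarith
  have : ∑ y, |p y - q y| ≤ ∑ y, (o * p y + o * q y) := by
    apply Finset.sum_le_sum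
    intro y _
    have h1 := mul_nonneg (ho y) (hp0 y).le
    have h2 := mul_nonneg (ho y) (hq0 y).le
    rw [abs_le]
    constructor
    · linarith [k2 y]
    · linarith [k1 y]
  rw [Finset.sum_add_distrib, ← Finset.mul_sum, ← Finset.mul_sum, hp.2, hq.2] at this
  unfold tv
  linarith

/-- Entropy of a product distribution. -/
theorem EE_log_prod {π : ∀ i, A i → ℝ} (hπ : ∀ i, IsDist (π i)) :
    EE π (fun a => Real.log (∏ i, π i (a i))) = - ∑ i, Hent (π i) := by
  have h1 : EE π (fun a => Real.log (∏ i, π i (a i))) =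
      EE π (fun a => ∑ i, Real.log (π i (a i))) := by
    unfold EE
    apply Finset.sum_congr rfl
    intro a _
    beta_reduce
    by_cases h : ∀ i, π i (a i) ≠ 0
    · rw [Real.log_prod (fun i _ => h i)]
    · push Not at h
      obtain ⟨i, hi⟩ := h
      rw [Finset.prod_eq_zero (Finset.mem_univ i) hi]
      simp
  rw [h1, EE_sum, ← Finset.sum_neg_distrib]
  apply Finset.sum_congr rfl
  intro i _
  rw [EE_marg hπ i (fun y => Real.log (π i y))]
  simp [Hent, Real.negMulLog]

/-- One-step lookahead value. -/
def Qf (γ : ℝ) (P : ∀ i : Fin n, (∀ j, S j) → A i → S i → ℝ) (r : ∀ i : Fin n, S i → A i → ℝ)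
    (W : (∀ j, S j) → ℝ) (s : ∀ j, S j) (a : ∀ i, A i) : ℝ :=
  rglob r s a + γ * EE (fun i => P i s (a i)) W

section stoch
variable {Ω : Type} [Fintype Ω] [DecidableEq Ω]

theorem stoch_pow_mono {M : Matrix Ω Ω ℝ} (h0 : ∀ x y, 0 ≤ M x y) (t : ℕ) {f g : Ω → ℝ}
    (h : ∀ x, f x ≤ g x) : ∀ x, ((M ^ t).mulVec f) x ≤ ((M ^ t).mulVec g) x := by
  induction t generalizing f g with
  | zero => simpa using h
  | succ t ih =>
    rw [pow_succ, ← Matrix.mulVec_mulVec, ← Matrix.mulVec_mulVec]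
    apply ih
    intro x
    exact Finset.sum_le_sum fun y _ => mul_le_mul_of_nonneg_left (h y) (h0 x y)

theorem stoch_pow_const {M : Matrix Ω Ω ℝ} (h1 : ∀ x, ∑ y, M x y = 1) (t : ℕ) (c : ℝ) :
    (M ^ t).mulVec (fun _ => c) = fun _ => c := by
  induction t with
  | zero => simp
  | succ t ih =>
    rw [pow_succ, ← Matrix.mulVec_mulVec]
    have : M.mulVec (fun _ => c) = fun _ => c := by
      funext x
      simp only [Matrix.mulVec, dotProduct]
      rw [← Finset.sum_mul, h1, one_mul]
    rw [this, ih]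

theorem exists_bound (f : Ω → ℝ) : ∃ B : ℝ, 0 ≤ B ∧ ∀ x, |f x| ≤ B :=
  ⟨∑ x, |f x|, Finset.sum_nonneg fun _ _ => abs_nonneg _, fun x =>
    Finset.single_le_sum (f := fun x => |f x|) (fun _ _ => abs_nonneg _) (Finset.mem_univ x)⟩

theorem stoch_pow_abs {M : Matrix Ω Ω ℝ} (h0 : ∀ x y, 0 ≤ M x y) (h1 : ∀ x, ∑ y, M x y = 1)
    (t : ℕ) {f : Ω → ℝ} {B : ℝ} (h : ∀ x, |f x| ≤ B) (x : Ω) : |((M ^ t).mulVec f) x| ≤ B := by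
  rw [abs_le]
  constructor
  · have := stoch_pow_mono h0 t (f := fun _ => -B) (g := f) (fun x => (abs_le.1 (h x)).1) x
    rwa [stoch_pow_const h1] at this
  · have := stoch_pow_mono h0 t (f := f) (g := fun _ => B) (fun x => (abs_le.1 (h x)).2) x
    rwa [stoch_pow_const h1] at this

theorem series_summable {M : Matrix Ω Ω ℝ} (h0 : ∀ x y, 0 ≤ M x y) (h1 : ∀ x, ∑ y, M x y = 1)
    {γ : ℝ} (hγ0 : 0 < γ) (hγ : γ < 1) (g : Ω → ℝ) (x : Ω) :
    Summable fun t : ℕ => γ ^ t * ((M ^ t).mulVec g) x := by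
  obtain ⟨B, hB0, hB⟩ := exists_bound g
  refine Summable.of_norm_bounded (g := fun t => γ ^ t * B)
    ((summable_geometric_of_lt_one hγ0.le hγ).mul_right B) ?_
  intro t
  rw [Real.norm_eq_abs, abs_mul, abs_of_pos (pow_pos hγ0 t)]
  exact mul_le_mul_of_nonneg_left (stoch_pow_abs h0 h1 t hB x) (pow_pos hγ0 t).le

theorem series_le {M : Matrix Ω Ω ℝ} (h0 : ∀ x y, 0 ≤ M x y) (h1 : ∀ x, ∑ y, M x y = 1)
    {γ : ℝ} (hγ0 : 0 < γ) (hγ : γ < 1) (g W : Ω → ℝ) (ε : ℝ)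
    (h : ∀ x, g x + γ * (M.mulVec W) x ≤ W x + ε) (x : Ω) :
    ∑' t : ℕ, γ ^ t * ((M ^ t).mulVec g) x ≤ W x + ε / (1 - γ) := by
  have hpart : ∀ N : ℕ, ∑ t ∈ Finset.range N, γ ^ t * ((M ^ t).mulVec g) x ≤
      W x - γ ^ N * ((M ^ N).mulVec W) x + ε * ∑ t ∈ Finset.range N, γ ^ t := by
    intro N
    induction N with
    | zero => simp
    | succ N ih =>
      rw [Finset.sum_range_succ, Finset.sum_range_succ]
      have hstep := stoch_pow_mono h0 N
        (f := g + γ • M.mulVec W) (g := W + fun _ => ε) (fun y => by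
          simpa using h y) x
      rw [Matrix.mulVec_add, Matrix.mulVec_add, stoch_pow_const h1, Matrix.mulVec_smul,
        Matrix.mulVec_mulVec, ← pow_succ] at hstep
      simp only [Pi.add_apply, Pi.smul_apply, smul_eq_mul] at hstep
      have := mul_le_mul_of_nonneg_left hstep (pow_pos hγ0 N).le
      rw [pow_succ γ N]
      nlinarith
  have hs := (series_summable h0 h1 hγ0 hγ g x).hasSum.tendsto_sum_nat
  have hg := (hasSum_geometric_of_lt_one hγ0.le hγ).tendsto_sum_nat
  obtain ⟨B, hB0, hB⟩ := exists_bound W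
  have hW := (series_summable h0 h1 hγ0 hγ W x).tendsto_atTop_zero
  have hlim := (tendsto_const_nhds (x := W x)).sub hW |>.add (hg.const_mul ε)
  have := le_of_tendsto_of_tendsto' hs hlim hpart
  rw [sub_zero] at this
  rwa [div_eq_mul_inv]

theorem series_ge {M : Matrix Ω Ω ℝ} (h0 : ∀ x y, 0 ≤ M x y) (h1 : ∀ x, ∑ y, M x y = 1)
    {γ : ℝ} (hγ0 : 0 < γ) (hγ : γ < 1) (g W : Ω → ℝ) (ε : ℝ)
    (h : ∀ x, W x - ε ≤ g x + γ * (M.mulVec W) x) (x : Ω) :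
    W x - ε / (1 - γ) ≤ ∑' t : ℕ, γ ^ t * ((M ^ t).mulVec g) x := by
  have := series_le h0 h1 hγ0 hγ (-g) (-W) ε (fun y => by
    rw [Matrix.mulVec_neg]; simp only [Pi.neg_apply]; linarith [h y]) x
  simp only [Matrix.mulVec_neg, Pi.neg_apply, mul_neg, tsum_neg] at this
  linarith

end stoch

theorem Pmat_nonneg {P : ∀ i : Fin n, (∀ j, S j) → A i → S i → ℝ} (hP : IsKernel P)
    {ζ : ∀ i : Fin n, (∀ j, S j) → A i → ℝ} (hζ : IsPolicy ζ) (s s' : ∀ j, S j) :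
    0 ≤ Pmat P ζ s s' := by
  unfold Pmat
  rw [Matrix.of_apply]
  apply Finset.sum_nonneg
  intro a _
  exact mul_nonneg (Finset.prod_nonneg fun i _ => (hζ i s).1 _)
    (Finset.prod_nonneg fun i _ => (hP i s _).1 _)

theorem Pmat_mulVec (P : ∀ i : Fin n, (∀ j, S j) → A i → S i → ℝ)
    (ζ : ∀ i : Fin n, (∀ j, S j) → A i → ℝ) (W : (∀ j, S j) → ℝ) (s : ∀ j, S j) :
    ((Pmat P ζ).mulVec W) s = EE (fun i => ζ i s) (fun a => EE (fun i => P i s (a i)) W) := by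
  simp only [Matrix.mulVec, dotProduct, Pmat, Matrix.of_apply, EE, jprob, Pglob, Finset.sum_mul,
    Finset.mul_sum]
  rw [Finset.sum_comm]
  simp only [mul_assoc]

theorem Pmat_row {P : ∀ i : Fin n, (∀ j, S j) → A i → S i → ℝ} (hP : IsKernel P)
    {ζ : ∀ i : Fin n, (∀ j, S j) → A i → ℝ} (hζ : IsPolicy ζ) (s : ∀ j, S j) :
    ∑ s', Pmat P ζ s s' = 1 := by
  have := Pmat_mulVec P ζ (fun _ => 1) s
  simp only [Matrix.mulVec, dotProduct, mul_one] at this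
  rw [this]
  simp only [EE_const (fun i => hP i s _)]
  exact EE_const (fun i => hζ i s) 1

theorem bell_eq {γ τ : ℝ} {P : ∀ i : Fin n, (∀ j, S j) → A i → S i → ℝ}
    {r : ∀ i : Fin n, S i → A i → ℝ}
    {ζ : ∀ i : Fin n, (∀ j, S j) → A i → ℝ} (hζ : IsPolicy ζ) (W : (∀ j, S j) → ℝ)
    (s : ∀ j, S j) :
    gz τ r ζ s + γ * ((Pmat P ζ).mulVec W) s = Fobj τ (Qf γ P r W s) (fun i => ζ i s) := by
  have hg : gz τ r ζ s = EE (fun i => ζ i s)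
      (fun a => rglob r s a + (-τ) * Real.log (∏ i, ζ i s (a i))) := by
    unfold gz EE jprob
    apply Finset.sum_congr rfl
    intro a _
    ring
  rw [hg, Pmat_mulVec, EE_add _ (fun a => rglob r s a), EE_smul _ (-τ),
    EE_log_prod (fun i => hζ i s)]
  unfold Fobj Qf
  rw [EE_add _ (fun a => rglob r s a), EE_smul _ γ]
  ring

theorem Vz_le {γ τ : ℝ} (hγ0 : 0 < γ) (hγ : γ < 1)
    {P : ∀ i : Fin n, (∀ j, S j) → A i → S i → ℝ} (hP : IsKernel P)
    {r : ∀ i : Fin n, S i → A i → ℝ}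
    {ζ : ∀ i : Fin n, (∀ j, S j) → A i → ℝ} (hζ : IsPolicy ζ) (W : (∀ j, S j) → ℝ) (ε : ℝ)
    (h : ∀ s, Fobj τ (Qf γ P r W s) (fun i => ζ i s) ≤ W s + ε) (s : ∀ j, S j) :
    Vz γ τ P r ζ s ≤ W s + ε / (1 - γ) := by
  refine series_le (Pmat_nonneg hP hζ) (Pmat_row hP hζ) hγ0 hγ _ W ε (fun x => ?_) s
  rw [bell_eq hζ]
  exact h x

theorem Vz_ge {γ τ : ℝ} (hγ0 : 0 < γ) (hγ : γ < 1)
    {P : ∀ i : Fin n, (∀ j, S j) → A i → S i → ℝ} (hP : IsKernel P)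
    {r : ∀ i : Fin n, S i → A i → ℝ}
    {ζ : ∀ i : Fin n, (∀ j, S j) → A i → ℝ} (hζ : IsPolicy ζ) (W : (∀ j, S j) → ℝ) (ε : ℝ)
    (h : ∀ s, W s - ε ≤ Fobj τ (Qf γ P r W s) (fun i => ζ i s)) (s : ∀ j, S j) :
    W s - ε / (1 - γ) ≤ Vz γ τ P r ζ s := by
  refine series_ge (Pmat_nonneg hP hζ) (Pmat_row hP hζ) hγ0 hγ _ W ε (fun x => ?_) s
  rw [bell_eq hζ]
  exact h x

theorem J_gap {γ τ : ℝ} (hγ0 : 0 < γ) (hγ : γ < 1)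
    {P : ∀ i : Fin n, (∀ j, S j) → A i → S i → ℝ} (hP : IsKernel P)
    {r : ∀ i : Fin n, S i → A i → ℝ} {ρ : (∀ j, S j) → ℝ} (hρ : IsDist ρ)
    {ζ ζ' : ∀ i : Fin n, (∀ j, S j) → A i → ℝ} (hζ : IsPolicy ζ) (hζ' : IsPolicy ζ')
    (W : (∀ j, S j) → ℝ) (ε ε' : ℝ)
    (h : ∀ s, Mval τ (Qf γ P r W s) ≤ W s + ε)
    (h' : ∀ s, W s - ε' ≤ Fobj τ (Qf γ P r W s) (fun i => ζ' i s)) :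
    Jobj γ τ P r ζ ρ - Jobj γ τ P r ζ' ρ ≤ (ε + ε') / (1 - γ) := by
  have h1 := Vz_le hγ0 hγ hP hζ W ε
    (fun s => (opt_max τ (Qf γ P r W s) _ (fun i => hζ i s)).trans (h s))
  have h2 := Vz_ge hγ0 hγ hP hζ' W ε' h'
  unfold Jobj
  rw [← Finset.sum_sub_distrib]
  calc _ ≤ ∑ s, ρ s * ((ε + ε') / (1 - γ)) := by
        apply Finset.sum_le_sum
        intro s _
        rw [← mul_sub]
        apply mul_le_mul_of_nonneg_left _ (hρ.1 s)
        rw [add_div]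
        linarith [h1 s, h2 s]
    _ = _ := by rw [← Finset.sum_mul, hρ.2, one_mul]

/-- Affine influence bound with budget `B` against the weights `u`. -/
def Bd {Ω : Type} (z : Prop) (u : Fin n → ℝ) (e : Ω → Fin n → ℝ) (h : Ω → ℝ) (B : ℝ) : Prop :=
  ∃ (α0 : ℝ) (α : Fin n → ℝ), 0 ≤ α0 ∧ (∀ j, 0 ≤ α j) ∧ (z → α0 = 0) ∧
    (∀ ω, h ω ≤ α0 + ∑ j, α j * e ω j) ∧ α0 + ∑ j, α j * u j ≤ B

section bd
variable {Ω : Type} {z : Prop} {u : Fin n → ℝ} {e : Ω → Fin n → ℝ}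

theorem Bd.mono {h h' : Ω → ℝ} {B B' : ℝ} (H : Bd z u e h B) (hh : ∀ ω, h' ω ≤ h ω)
    (hB : B ≤ B') : Bd z u e h' B' := by
  obtain ⟨α0, α, h0, h1, h2, h3, h4⟩ := H
  exact ⟨α0, α, h0, h1, h2, fun ω => (hh ω).trans (h3 ω), h4.trans hB⟩

theorem Bd.add {h h' : Ω → ℝ} {B B' : ℝ} (H : Bd z u e h B) (H' : Bd z u e h' B') :
    Bd z u e (fun ω => h ω + h' ω) (B + B') := by
  obtain ⟨α0, α, h0, h1, h2, h3, h4⟩ := H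
  obtain ⟨β0, β, k0, k1, k2, k3, k4⟩ := H'
  refine ⟨α0 + β0, fun j => α j + β j, by linarith, fun j => add_nonneg (h1 j) (k1 j),
    fun hz => by rw [h2 hz, k2 hz, add_zero], fun ω => ?_, ?_⟩
  · simp only [add_mul, Finset.sum_add_distrib]
    linarith [h3 ω, k3 ω]
  · simp only [add_mul, Finset.sum_add_distrib]
    linarith

theorem Bd.smul {h : Ω → ℝ} {B c : ℝ} (hc : 0 ≤ c) (H : Bd z u e h B) :
    Bd z u e (fun ω => c * h ω) (c * B) := by
  obtain ⟨α0, α, h0, h1, h2, h3, h4⟩ := H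
  refine ⟨c * α0, fun j => c * α j, mul_nonneg hc h0, fun j => mul_nonneg hc (h1 j),
    fun hz => by rw [h2 hz, mul_zero], fun ω => ?_, ?_⟩
  · have := mul_le_mul_of_nonneg_left (h3 ω) hc
    simpa only [mul_add, Finset.mul_sum, mul_assoc] using this
  · have := mul_le_mul_of_nonneg_left h4 hc
    simpa only [mul_add, Finset.mul_sum, mul_assoc] using this

theorem Bd.zero : Bd z u e (fun _ => 0) 0 :=
  ⟨0, fun _ => 0, le_refl _, fun _ => le_refl _, fun _ => rfl, fun _ => by simp, by simp⟩

theorem Bd.sum {ι : Type} (t : Finset ι) {h : ι → Ω → ℝ} {B : ι → ℝ}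
    (H : ∀ k ∈ t, Bd z u e (h k) (B k)) :
    Bd z u e (fun ω => ∑ k ∈ t, h k ω) (∑ k ∈ t, B k) := by
  classical
  induction t using Finset.induction_on with
  | empty => simpa using Bd.zero
  | insert a t ha ih =>
    simp only [Finset.sum_insert ha]
    exact (H a (Finset.mem_insert_self a t)).add
      (ih fun k hk => H k (Finset.mem_insert_of_mem hk))

theorem Bd.ind (j : Fin n) : Bd z u e (fun ω => e ω j) (u j) := by
  refine ⟨0, fun k => if k = j then 1 else 0, le_refl _, fun k => by beta_reduce; split_ifs <;> norm_num,
    fun _ => rfl, fun ω => by simp, by simp⟩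

theorem Bd.const (hz : ¬ z) {c : ℝ} (hc : 0 ≤ c) : Bd z u e (fun _ => c) c :=
  ⟨c, fun _ => 0, hc, fun _ => le_refl _, fun h => absurd h hz, fun _ => by simp, by simp⟩

theorem Bd.comp {α0 : ℝ} {α : Fin n → ℝ} {B c : ℝ} (h0 : 0 ≤ α0) (h1 : ∀ j, 0 ≤ α j)
    (h2 : z → α0 = 0) (h4 : α0 + ∑ j, α j * u j ≤ B) {k : Fin n → Ω → ℝ} (hc : 1 ≤ c)
    (hk : ∀ j, Bd z u e (k j) (c * u j)) {h : Ω → ℝ}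
    (hh : ∀ ω, h ω ≤ α0 + ∑ j, α j * k j ω) : Bd z u e h (c * B) := by
  have H0 : Bd z u e (fun _ => α0) α0 :=
    ⟨α0, fun _ => 0, h0, fun _ => le_refl _, h2, fun _ => by simp, by simp⟩
  refine (H0.add (Bd.sum Finset.univ fun j _ => (hk j).smul (h1 j))).mono hh ?_
  have : ∑ j, α j * (c * u j) = c * ∑ j, α j * u j := by
    rw [Finset.mul_sum]; exact Finset.sum_congr rfl fun j _ => by ring
  rw [this]
  nlinarith

end bd

/-- Edge-Lipschitz profiles. -/
def EL (G : SimpleGraph (Fin n)) (D : Fin n → ℕ) : Prop := ∀ i j, G.Adj i j → D i ≤ D j + 1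

/-- Weights attached to a profile. -/
def uw (μ : ℝ) (D : Fin n → ℕ) (j : Fin n) : ℝ := (1 + (D j : ℝ)) ^ (-μ)

theorem uw_pos (μ : ℝ) (D : Fin n → ℕ) (j : Fin n) : 0 < uw μ D j :=
  Real.rpow_pos_of_pos (by positivity) _

theorem uw_le_one {μ : ℝ} (hμ : 0 ≤ μ) (D : Fin n → ℕ) (j : Fin n) : uw μ D j ≤ 1 := by
  apply Real.rpow_le_one_of_one_le_of_nonpos
  · have : (0 : ℝ) ≤ D j := by positivity
    linarith
  · linarith

theorem uw_comp {μ : ℝ} (hμ : 0 ≤ μ) (D D' : Fin n → ℕ) (i j : Fin n)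
    (h : 1 + D i ≤ 2 * (1 + D' j)) : uw μ D' j ≤ 2 ^ μ * uw μ D i := by
  unfold uw
  have h' : (1 : ℝ) + D i ≤ 2 * (1 + D' j) := by exact_mod_cast h
  have hi : (0 : ℝ) < 1 + D i := by positivity
  have hj : (0 : ℝ) < 1 + D' j := by positivity
  have := Real.rpow_le_rpow hi.le h' hμ
  rw [Real.mul_rpow (by norm_num) hj.le] at this
  rw [Real.rpow_neg hi.le, Real.rpow_neg hj.le, ← div_eq_mul_inv,
    le_div_iff₀ (Real.rpow_pos_of_pos hi _), inv_mul_le_iff₀ (Real.rpow_pos_of_pos hj _)]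
  linarith

/-- Disagreement indicator of two states. -/
def eS (ω : (∀ j, S j) × (∀ j, S j)) (j : Fin n) : ℝ := if ω.1 j ≠ ω.2 j then 1 else 0

/-- Disagreement indicator of two state-action pairs. -/
def eQ (ω : ((∀ j, S j) × (∀ j, A j)) × ((∀ j, S j) × (∀ j, A j))) (j : Fin n) : ℝ :=
  if ω.1.1 j ≠ ω.2.1 j ∨ ω.1.2 j ≠ ω.2.2 j then 1 else 0

def GoodV (G : SimpleGraph (Fin n)) (μ b : ℝ) (V : Fin n → (∀ j, S j) → ℝ) : Prop :=
  ∀ m D, EL G D → Bd (∀ j, D j = 0) (uw μ D) (eS (S := S))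
    (fun ω => V m ω.1 - V m ω.2) (b * uw μ D m)

def GoodQ (G : SimpleGraph (Fin n)) (μ b : ℝ)
    (Q : Fin n → (∀ j, S j) → (∀ j, A j) → ℝ) : Prop :=
  ∀ m D, EL G D → Bd (∀ j, D j = 0) (uw μ D) (eQ (S := S) (A := A))
    (fun ω => Q m ω.1.1 ω.1.2 - Q m ω.2.1 ω.2.2) (b * uw μ D m)

/-- Telescoping over coordinates. -/
theorem telescope {X : Fin n → Type} [∀ i, DecidableEq (X i)] (d : (∀ i, X i) → (∀ i, X i) → ℝ)
    (h0 : ∀ x, d x x = 0) (htri : ∀ x y w, d x w ≤ d x y + d y w) (c : Fin n → ℝ)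
    (hc : ∀ x j y, d x (Function.update x j y) ≤ c j) (x y : ∀ i, X i) :
    d x y ≤ ∑ j, c j * (if x j ≠ y j then 1 else 0) := by
  have key : ∀ t : Finset (Fin n), d x (t.piecewise y x) ≤
      ∑ j ∈ t, c j * (if x j ≠ y j then 1 else 0) := by
    intro t
    induction t using Finset.induction_on with
    | empty => simp [h0]
    | insert j t hj ih =>
      rw [Finset.sum_insert hj, Finset.piecewise_insert]
      by_cases hxy : x j = y j
      · have : Function.update (t.piecewise y x) j (y j) = t.piecewise y x := by
          rw [← hxy]
          have : t.piecewise y x j = x j := Finset.piecewise_eq_of_notMem _ _ _ hj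
          rw [← this, Function.update_eq_self]
        rw [this]
        simpa [hxy] using ih
      · have := htri x (t.piecewise y x) (Function.update (t.piecewise y x) j (y j))
        have h2 := hc (t.piecewise y x) j (y j)
        simp only [ne_eq, hxy, not_false_eq_true, if_true, mul_one]
        simp only [ne_eq] at ih
        linarith
  have := key Finset.univ
  rwa [Finset.piecewise_univ] at this

theorem Cmat_off (G : SimpleGraph (Fin n)) [DecidableRel G.Adj]
    (P : ∀ i : Fin n, (∀ j, S j) → A i → S i → ℝ) (hloc : IsLocalKernel G P) (i j : Fin n)
    (hij : j ≠ i) (s : ∀ k, S k) (y : S j) (a : A i) :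
    tv (P i s a) (P i (Function.update s j y) a) ≤ Cmat G P i j := by
  unfold Cmat
  rw [if_neg hij]
  split_ifs with hadj
  · refine le_trans ?_ (le_ciSup (Set.finite_range _).bddAbove s)
    refine le_trans ?_ (le_ciSup (Set.finite_range _).bddAbove y)
    exact (le_ciSup (f := fun ai => tv (P i s ai) (P i (Function.update s j y) ai))
      (Set.finite_range _).bddAbove a)
  · rw [hloc i s (Function.update s j y) _ a, tv_self]
    intro k hk
    by_cases h : k = j
    · subst h
      rcases hk with hk | hk
      · exact absurd hk hij
      · exact absurd hk hadj
    · rw [Function.update_of_ne h]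

theorem Cmat_diag (G : SimpleGraph (Fin n)) [DecidableRel G.Adj]
    (P : ∀ i : Fin n, (∀ j, S j) → A i → S i → ℝ) (i : Fin n)
    (s : ∀ k, S k) (y : S i) (a a' : A i) :
    tv (P i s a) (P i (Function.update s i y) a') ≤ Cmat G P i i := by
  unfold Cmat
  rw [if_pos rfl]
  refine le_trans ?_ (le_ciSup (Set.finite_range _).bddAbove s)
  refine le_trans ?_ (le_ciSup (Set.finite_range _).bddAbove y)
  refine le_trans ?_ (le_ciSup (Set.finite_range _).bddAbove a)
  exact (le_ciSup (f := fun ai' => tv (P i s a) (P i (Function.update s i y) ai'))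
      (Set.finite_range _).bddAbove a')

theorem Cmat_nonneg (G : SimpleGraph (Fin n)) [DecidableRel G.Adj]
    (P : ∀ i : Fin n, (∀ j, S j) → A i → S i → ℝ) (i j : Fin n) : 0 ≤ Cmat G P i j := by
  unfold Cmat
  split_ifs
  · exact Real.iSup_nonneg fun _ => Real.iSup_nonneg fun _ => Real.iSup_nonneg fun _ =>
      Real.iSup_nonneg fun _ => tv_nonneg _ _
  · exact Real.iSup_nonneg fun _ => Real.iSup_nonneg fun _ => Real.iSup_nonneg fun _ =>
      tv_nonneg _ _
  · exact le_refl _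

theorem tv_P_le (G : SimpleGraph (Fin n)) [DecidableRel G.Adj]
    (P : ∀ i : Fin n, (∀ j, S j) → A i → S i → ℝ) (hloc : IsLocalKernel G P) (i : Fin n)
    (ω : ((∀ j, S j) × (∀ j, A j)) × ((∀ j, S j) × (∀ j, A j))) :
    tv (P i ω.1.1 (ω.1.2 i)) (P i ω.2.1 (ω.2.2 i)) ≤ ∑ j, Cmat G P i j * eQ ω j := by
  let X : Fin n → Type := fun j => S j × A j
  let d : (∀ j, X j) → (∀ j, X j) → ℝ := fun x y =>
    tv (P i (fun j => (x j).1) (x i).2) (P i (fun j => (y j).1) (y i).2)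
  have := telescope (X := X) d (fun x => tv_self _) (fun x y w => tv_triangle _ _ _)
    (fun j => Cmat G P i j) (fun x j y => by
      have hs : (fun k => (Function.update x j y k).1) =
          Function.update (fun k => (x k).1) j y.1 := by
        funext k
        by_cases h : k = j
        · subst h; simp
        · simp [Function.update_of_ne h]
      simp only [d, hs]
      by_cases h : j = i
      · subst h
        exact Cmat_diag G P j _ _ _ _
      · rw [Function.update_of_ne (Ne.symm h)]
        exact Cmat_off G P hloc i j h _ _ _)
    (fun j => (ω.1.1 j, ω.1.2 j)) (fun j => (ω.2.1 j, ω.2.2 j))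
  refine this.trans (le_of_eq ?_)
  apply Finset.sum_congr rfl
  intro j _
  congr 1
  unfold eQ
  refine if_congr ?_ rfl rfl
  show ¬ (((ω.1.1 j, ω.1.2 j) : S j × A j) = (ω.2.1 j, ω.2.2 j)) ↔ _
  rw [Prod.mk.injEq]
  tauto

theorem C_weight (G : SimpleGraph (Fin n)) [DecidableRel G.Adj]
    (P : ∀ i : Fin n, (∀ j, S j) → A i → S i → ℝ) {μ : ℝ} (hμ : 0 ≤ μ) (i : Fin n)
    (hC : 2 ^ μ * ∑ j, Cmat G P i j ≤ 1) (D : Fin n → ℕ) (hD : EL G D) :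
    ∑ j, Cmat G P i j * uw μ D j ≤ uw μ D i := by
  have hu := uw_pos μ D i
  calc _ ≤ ∑ j, Cmat G P i j * (2 ^ μ * uw μ D i) := by
        apply Finset.sum_le_sum
        intro j _
        by_cases hji : j = i ∨ G.Adj i j
        · apply mul_le_mul_of_nonneg_left _ (Cmat_nonneg G P i j)
          apply uw_comp hμ
          rcases hji with h | h
          · subst h; omega
          · have := hD i j h; omega
        · push Not at hji
          have : Cmat G P i j = 0 := by
            unfold Cmat
            rw [if_neg hji.1, if_neg hji.2]
          rw [this]; simp
    _ = (2 ^ μ * ∑ j, Cmat G P i j) * uw μ D i := by rw [← Finset.sum_mul]; ring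
    _ ≤ 1 * uw μ D i := mul_le_mul_of_nonneg_right hC hu.le
    _ = _ := one_mul _

/-- Local lookahead functions. -/
def Ql (γ : ℝ) (P : ∀ i : Fin n, (∀ j, S j) → A i → S i → ℝ) (r : ∀ i : Fin n, S i → A i → ℝ)
    (V : Fin n → (∀ j, S j) → ℝ) (m : Fin n) (s : ∀ j, S j) (a : ∀ i, A i) : ℝ :=
  r m (s m) (a m) + γ * EE (fun i => P i s (a i)) (V m)

theorem goodQ_of_goodV (G : SimpleGraph (Fin n)) [DecidableRel G.Adj]
    {P : ∀ i : Fin n, (∀ j, S j) → A i → S i → ℝ} (hP : IsKernel P) (hloc : IsLocalKernel G P)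
    {r : ∀ i : Fin n, S i → A i → ℝ} {rbar : ℝ}
    (hr : ∀ i si ai, 0 ≤ r i si ai ∧ r i si ai ≤ rbar) (hrbar : 0 ≤ rbar)
    {γ : ℝ} (hγ : 0 ≤ γ) {μ : ℝ} (hμ : 0 ≤ μ)
    (hC : ∀ i, 2 ^ μ * ∑ j, Cmat G P i j ≤ 1) {b : ℝ} {V : Fin n → (∀ j, S j) → ℝ}
    (hV : GoodV G μ b V) : GoodQ G μ (rbar + γ * b) (Ql γ P r V) := by
  intro m D hD
  obtain ⟨α0, α, h0, h1, h2, h3, h4⟩ := hV m D hD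
  have hR : Bd (∀ j, D j = 0) (uw μ D) (eQ (S := S) (A := A))
      (fun ω => r m (ω.1.1 m) (ω.1.2 m) - r m (ω.2.1 m) (ω.2.2 m)) (rbar * uw μ D m) := by
    refine ((Bd.ind m).smul hrbar).mono (fun ω => ?_) (le_refl _)
    unfold eQ
    split_ifs with h
    · linarith [(hr m (ω.1.1 m) (ω.1.2 m)).2, (hr m (ω.2.1 m) (ω.2.2 m)).1]
    · push Not at h
      rw [h.1, h.2]; simp
  have hPV : Bd (∀ j, D j = 0) (uw μ D) (eQ (S := S) (A := A))
      (fun ω => EE (fun i => P i ω.1.1 (ω.1.2 i)) (V m) - EE (fun i => P i ω.2.1 (ω.2.2 i)) (V m))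
      (1 * (b * uw μ D m)) := by
    refine Bd.comp h0 h1 h2 h4 (le_refl 1)
      (k := fun i ω => tv (P i ω.1.1 (ω.1.2 i)) (P i ω.2.1 (ω.2.2 i))) (fun i => ?_) (fun ω => ?_)
    · refine (Bd.sum Finset.univ fun j _ => (Bd.ind j).smul (Cmat_nonneg G P i j)).mono
        (fun ω => tv_P_le G P hloc i ω) ?_
      rw [one_mul]
      exact C_weight G P hμ i (hC i) D hD
    · exact EE_couple (fun i => hP i _ _) (fun i => hP i _ _) h1 (fun x y => h3 (x, y))
  refine (hR.add (hPV.smul hγ)).mono (fun ω => ?_) ?_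
  · unfold Ql
    linarith
  · linarith

/-- Average of local functions. -/
def Qav (Q : Fin n → (∀ j, S j) → (∀ j, A j) → ℝ) (s : ∀ j, S j) (a : ∀ j, A j) : ℝ :=
  (1 / (n : ℝ)) * ∑ m, Q m s a

/-- Conditional value of an action. -/
def qv (ζ : (∀ j, S j) → ∀ i, A i → ℝ) (Q : Fin n → (∀ j, S j) → (∀ j, A j) → ℝ) (i m : Fin n)
    (s : ∀ j, S j) (a : A i) : ℝ := EE (Function.update (ζ s) i (pt a)) (Q m s)

/-- Policy locality with constant `θ` for the profile `D`. -/
def GoodP (D : Fin n → ℕ) (μ θ : ℝ) (ζ : (∀ j, S j) → ∀ i, A i → ℝ) : Prop :=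
  ∀ i, Bd (∀ j, D j = 0) (uw μ D) (eS (S := S))
    (fun ω => tv (ζ ω.1 i) (ζ ω.2 i)) (θ * uw μ D i)

theorem eQ_le (s s' : ∀ j, S j) (x y : ∀ j, A j) (j : Fin n) :
    eQ ((s, x), (s', y)) j ≤ eS (s, s') j + (if x j ≠ y j then 1 else 0) := by
  unfold eQ eS
  by_cases h1 : s j = s' j <;> by_cases h2 : x j = y j <;> simp [h1, h2]

theorem eS_nonneg (ω : (∀ j, S j) × (∀ j, S j)) (j : Fin n) : 0 ≤ eS ω j := by
  unfold eS; split_ifs <;> norm_num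

theorem EE_Q_le {p q : ∀ i, A i → ℝ} (hp : ∀ i, IsDist (p i)) (hq : ∀ i, IsDist (q i))
    {Q : (∀ j, S j) → (∀ j, A j) → ℝ} {α0 : ℝ} {α : Fin n → ℝ} (h1 : ∀ j, 0 ≤ α j)
    (h3 : ∀ ω : ((∀ j, S j) × (∀ j, A j)) × ((∀ j, S j) × (∀ j, A j)),
      Q ω.1.1 ω.1.2 - Q ω.2.1 ω.2.2 ≤ α0 + ∑ j, α j * eQ ω j) (s s' : ∀ j, S j) :
    EE p (Q s) - EE q (Q s') ≤ α0 + ∑ j, α j * (eS (s, s') j + tv (p j) (q j)) := by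
  have := EE_couple hp hq (f := Q s) (g := Q s') (c := α0 + ∑ j, α j * eS (s, s') j) h1 (by
    intro x y
    refine (h3 ((s, x), (s', y))).trans ?_
    rw [add_assoc, ← Finset.sum_add_distrib]
    gcongr with j _
    rw [← mul_add]
    exact mul_le_mul_of_nonneg_left (eQ_le s s' x y j) (h1 j))
  refine this.trans (le_of_eq ?_)
  rw [add_assoc, ← Finset.sum_add_distrib]
  simp only [mul_add]

theorem Bd.pull {Ω Ω' : Type} {z : Prop} {u : Fin n → ℝ} {e : Ω → Fin n → ℝ} {h : Ω → ℝ} {B : ℝ}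
    (H : Bd z u e h B) (f : Ω' → Ω) : Bd z u (fun ω => e (f ω)) (fun ω => h (f ω)) B := by
  obtain ⟨α0, α, h0, h1, h2, h3, h4⟩ := H
  exact ⟨α0, α, h0, h1, h2, fun ω => h3 (f ω), h4⟩

theorem q_diff {G : SimpleGraph (Fin n)} {μ θ b : ℝ} (hμ : 0 ≤ μ) (hb : 0 ≤ b) (hθ : 0 ≤ θ)
    {ζ : (∀ j, S j) → ∀ i, A i → ℝ} (hd : ∀ s i, IsDist (ζ s i))
    {Q : Fin n → (∀ j, S j) → (∀ j, A j) → ℝ} (hQ : GoodQ G μ b Q) {D : Fin n → ℕ} (hζ : GoodP D μ θ ζ)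
    (hD : EL G D) (i m : Fin n) :
    Bd (∀ j, D j = 0) (uw μ D)
      (fun ω : ((∀ j, S j) × (∀ j, S j)) × (A i × A i) => eS ω.1)
      (fun ω => (qv ζ Q i m ω.1.1 ω.2.1 - qv ζ Q i m ω.1.2 ω.2.1) -
        (qv ζ Q i m ω.1.1 ω.2.2 - qv ζ Q i m ω.1.2 ω.2.2))
      (2 * (1 + θ) * b * 2 ^ μ * uw μ D i) := by
  have hui := uw_pos μ D i
  have h2μ : (1 : ℝ) ≤ 2 ^ μ := Real.one_le_rpow (by norm_num) hμ
  by_cases hcase : 1 + D i ≤ 2 * (1 + D m)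
  · have hum := uw_comp hμ D D i m hcase
    obtain ⟨α0, α, h0, h1, h2, h3, h4⟩ := hQ m D hD
    have key : ∀ (f : ((∀ j, S j) × (∀ j, S j)) × (A i × A i) →
        ((∀ j, S j) × (∀ j, S j)) × A i), (∀ ω j, eS (f ω).1 j = eS ω.1 j) →
        (∀ ω j, tv (ζ (f ω).1.1 j) (ζ (f ω).1.2 j) = tv (ζ ω.1.1 j) (ζ ω.1.2 j)) →
        Bd (∀ j, D j = 0) (uw μ D)
        (fun ω : ((∀ j, S j) × (∀ j, S j)) × (A i × A i) => eS ω.1)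
        (fun ω => qv ζ Q i m (f ω).1.1 (f ω).2 - qv ζ Q i m (f ω).1.2 (f ω).2)
        ((1 + θ) * (b * uw μ D m)) := by
      intro f hf hf2
      refine Bd.comp h0 h1 h2 h4 (by linarith)
        (k := fun j ω => eS ω.1 j + tv (ζ ω.1.1 j) (ζ ω.1.2 j)) (fun j => ?_) (fun ω => ?_)
      · rw [add_mul, one_mul]
        exact (Bd.ind j).add ((hζ j).pull Prod.fst)
      · unfold qv
        refine (EE_Q_le (upd_dist (hd _) i (pt_dist _)) (upd_dist (hd _) i (pt_dist _)) h1
          h3 _ _).trans ?_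
        gcongr with j _
        · exact h1 j
        · exact le_of_eq (hf ω j)
        · rw [← hf2]
          by_cases hj : j = i
          · subst hj; simp only [Function.update_self, tv_self]; exact tv_nonneg _ _
          · simp only [Function.update_of_ne hj, le_refl]
    have k1 := key (fun ω => (ω.1, ω.2.1)) (fun _ _ => rfl) (fun _ _ => rfl)
    have k2 := key (fun ω => ((ω.1.2, ω.1.1), ω.2.2))
      (fun ω j => by simp only [eS, ne_eq, eq_comm]) (fun ω j => tv_comm _ _)
    refine (k1.add k2).mono (fun ω => by simp only; linarith) ?_
    have : (1 + θ) * b * uw μ D m ≤ (1 + θ) * b * (2 ^ μ * uw μ D i) :=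
      mul_le_mul_of_nonneg_left hum (by positivity)
    linarith
  · have hz : ¬ ∀ j, D j = 0 := fun h => hcase (by rw [h i, h m]; omega)
    let D' : Fin n → ℕ := fun j => D i - D j
    have hD' : EL G D' := by
      intro j k hjk
      have := hD k j hjk.symm
      simp only [D']; omega
    have hum : uw μ D' m ≤ 2 ^ μ * uw μ D i := uw_comp hμ D D' i m (by simp only [D']; omega)
    obtain ⟨α0, α, h0, h1, h2, h3, h4⟩ := hQ m D' hD'
    have hDi : uw μ D' i = 1 := by simp [uw, D']
    have hα : α0 + α i ≤ b * (2 ^ μ * uw μ D i) := by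
      have : α i ≤ ∑ j, α j * uw μ D' j := by
        have := Finset.single_le_sum (f := fun j => α j * uw μ D' j)
          (fun j _ => mul_nonneg (h1 j) (uw_pos μ D' j).le) (Finset.mem_univ i)
        simpa only [hDi, mul_one] using this
      have := mul_le_mul_of_nonneg_left hum hb
      linarith
    have key : ∀ s a c, qv ζ Q i m s a - qv ζ Q i m s c ≤ b * (2 ^ μ * uw μ D i) := by
      intro s a c
      refine le_trans ?_ hα
      unfold qv
      refine (EE_Q_le (upd_dist (hd _) i (pt_dist _)) (upd_dist (hd _) i (pt_dist _)) h1
          h3 _ _).trans ?_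
      gcongr
      rw [Finset.sum_eq_single i]
      · simp only [Function.update_self]
        have := tv_le_one (pt_dist a) (pt_dist c)
        have h5 : eS (s, s) i = 0 := by simp [eS]
        rw [h5]
        nlinarith [h1 i]
      · intro j _ hj
        simp [Function.update_of_ne hj, tv_self, eS]
      · simp
    refine (Bd.const hz (c := 2 * b * (2 ^ μ * uw μ D i)) (by positivity)).mono
      (fun ω => ?_) ?_
    · have e1 := key ω.1.1 ω.2.1 ω.2.2
      have e2 := key ω.1.2 ω.2.2 ω.2.1
      linarith
    · have : 0 ≤ θ * (b * (2 ^ μ * uw μ D i)) := by positivity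
      linarith

theorem GoodP_step [NeZero n] {G : SimpleGraph (Fin n)} {μ θ b τ l : ℝ} (hμ : 0 ≤ μ) (hb : 0 ≤ b)
    (hθ : 0 ≤ θ) (hτ : 0 < τ) (hbτ : 32 * b * 2 ^ μ ≤ τ) (hl0 : 0 ≤ l) (hl1 : l ≤ 1)
    {Q : Fin n → (∀ j, S j) → (∀ j, A j) → ℝ} (hQ : GoodQ G μ b Q)
    {D : Fin n → ℕ} (hD : EL G D) (hζ : GoodP D μ θ (fun s => opt τ (fun a => l * Qav Q s a))) :
    GoodP D μ ((1 + θ) / 16) (fun s => opt τ (fun a => l * Qav Q s a)) := by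
  set ζ : (∀ j, S j) → ∀ i, A i → ℝ := fun s => opt τ (fun a => l * Qav Q s a) with hζdef
  have hd : ∀ s i, IsDist (ζ s i) := fun s => opt_dist _ _
  intro i
  have hn : (0 : ℝ) < n := Nat.cast_pos.2 (Nat.pos_of_ne_zero (NeZero.ne n))
  have hui := uw_pos μ D i
  have H := ((Bd.sum Finset.univ fun m _ => q_diff hμ hb hθ hd hQ hζ hD i m).smul
    (c := l / (τ * n)) (by positivity)).mono (fun ω => le_refl _)
    (B' := (1 + θ) / 16 * uw μ D i) (by
      simp only [Finset.sum_const, Finset.card_univ, Fintype.card_fin, nsmul_eq_mul]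
      rw [show l / (τ * n) * (n * (2 * (1 + θ) * b * 2 ^ μ * uw μ D i)) =
        (l * (32 * b * 2 ^ μ) / τ) * ((1 + θ) / 16 * uw μ D i) by field_simp; ring]
      have : l * (32 * b * 2 ^ μ) / τ ≤ 1 := by
        rw [div_le_one hτ]
        have : 0 ≤ 32 * b * 2 ^ μ := by positivity
        nlinarith
      have h2 : 0 ≤ (1 + θ) / 16 * uw μ D i := by positivity
      nlinarith)
  obtain ⟨α0, α, h0, h1, h2, h3, h4⟩ := H
  refine ⟨α0, α, h0, h1, h2, fun ω => ?_, h4⟩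
  have sm1 := opt_softmax hτ (fun a => l * Qav Q ω.1 a) i
  have sm2 := opt_softmax hτ (fun a => l * Qav Q ω.2 a) i
  refine tv_le_of_log (hd ω.1 i) (hd ω.2 i) sm1.1 sm2.1 ?_
  intro a c
  refine le_trans (le_of_eq ?_) (h3 (ω, (a, c)))
  have hexp : ∀ s a, EE (Function.update (ζ s) i (pt a)) (fun a => l * Qav Q s a) =
      l * (1 / n * ∑ m, qv ζ Q i m s a) := by
    intro s a
    unfold Qav qv
    rw [EE_smul, EE_smul, EE_sum]
  have t1 := sm1.2 a c
  have t2 := sm2.2 a c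
  have e1 := hexp ω.1 a
  have e2 := hexp ω.1 c
  have e3 := hexp ω.2 a
  have e4 := hexp ω.2 c
  simp only [hζdef] at e1 e2 e3 e4
  rw [e1, e2] at t1
  rw [e3, e4] at t2
  have : ∀ x y : ℝ, τ * x = y → x = y / τ := by
    intro x y h; rw [← h]; field_simp
  have t3 := this _ _ t1
  have t4 := this _ _ t2
  simp only [hζdef]
  rw [show ∀ x y z w : ℝ, (x - y) - (z - w) = (x - z) - (y - w) by intros; ring, t3, t4]
  simp only [Finset.sum_sub_distrib]
  field_simp
  ring

theorem GoodP_opt [NeZero n] {G : SimpleGraph (Fin n)} {μ b τ l : ℝ} (hμ : 0 ≤ μ) (hb : 0 ≤ b)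
    (hτ : 0 < τ) (hbτ : 32 * b * 2 ^ μ ≤ τ) (hl0 : 0 ≤ l) (hl1 : l ≤ 1)
    {Q : Fin n → (∀ j, S j) → (∀ j, A j) → ℝ} (hQ : GoodQ G μ b Q)
    {D : Fin n → ℕ} (hD : EL G D) :
    GoodP D μ (1 / 8) (fun s => opt τ (fun a => l * Qav Q s a)) := by
  set ζ : (∀ j, S j) → ∀ i, A i → ℝ := fun s => opt τ (fun a => l * Qav Q s a) with hζdef
  have hd : ∀ s i, IsDist (ζ s i) := fun s => opt_dist _ _
  have mono : ∀ θ θ' : ℝ, θ ≤ θ' → GoodP D μ θ ζ → GoodP D μ θ' ζ := fun θ θ' h H i =>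
    (H i).mono (fun _ => le_refl _) (mul_le_mul_of_nonneg_right h (uw_pos μ D i).le)
  set θ0 : ℝ := ∑ i, n / uw μ D i with hθ0
  have hpos : ∀ i, 0 ≤ (n : ℝ) / uw μ D i := fun i => div_nonneg (Nat.cast_nonneg n) (uw_pos μ D i).le
  have hθ0n : 0 ≤ θ0 := Finset.sum_nonneg fun i _ => hpos i
  have hstart : GoodP D μ θ0 ζ := by
    intro i
    refine (Bd.sum Finset.univ fun j _ => Bd.ind j).mono (fun ω => ?_) ?_
    · by_cases h : ω.1 = ω.2
      · simp only [h, tv_self]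
        exact Finset.sum_nonneg fun j _ => eS_nonneg ω j
      · obtain ⟨j, hj⟩ := Function.ne_iff.1 h
        refine (tv_le_one (hd _ _) (hd _ _)).trans ?_
        refine le_trans ?_ (Finset.single_le_sum (fun j _ => eS_nonneg ω j) (Finset.mem_univ j))
        simp [eS, hj]
    · have h1 : ∑ j, uw μ D j ≤ n := by
        refine (Finset.sum_le_sum fun j _ => uw_le_one hμ D j).trans (by simp)
      have h2 : n / uw μ D i ≤ θ0 :=
        Finset.single_le_sum (f := fun i => (n : ℝ) / uw μ D i) (fun i _ => hpos i) (Finset.mem_univ i)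
      rw [div_le_iff₀ (uw_pos μ D i)] at h2
      linarith
  have hiter : ∀ k : ℕ, GoodP D μ (1 / 15 + θ0 / 16 ^ k) ζ := by
    intro k
    induction k with
    | zero => exact mono _ _ (by norm_num) hstart
    | succ k ih =>
      refine mono _ _ (le_of_eq ?_) (GoodP_step hμ hb (by positivity) hτ hbτ hl0 hl1 hQ hD ih)
      rw [pow_succ]; field_simp; ring
  obtain ⟨k, hk⟩ := exists_pow_lt_of_lt_one (show (0 : ℝ) < (1 / 20) / (θ0 + 1) by positivity)
    (show (1 / 16 : ℝ) < 1 by norm_num)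
  refine mono _ _ ?_ (hiter k)
  have : θ0 / 16 ^ k ≤ 1 / 20 := by
    rw [lt_div_iff₀ (by positivity)] at hk
    have h16 : (0 : ℝ) < (1 / 16) ^ k := by positivity
    rw [div_eq_mul_inv, ← inv_pow, ← one_div]
    nlinarith
  linarith

/-- Averaging a local function over the policy. -/
theorem goodV_avg [NeZero n] {G : SimpleGraph (Fin n)} {μ b τ l : ℝ} (hμ : 0 ≤ μ) (hb : 0 ≤ b)
    (hτ : 0 < τ) (hbτ : 32 * b * 2 ^ μ ≤ τ) (hl0 : 0 ≤ l) (hl1 : l ≤ 1)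
    {Q : Fin n → (∀ j, S j) → (∀ j, A j) → ℝ} (hQ : GoodQ G μ b Q) :
    GoodV G μ (9 / 8 * b) (fun m s => EE (opt τ (fun a => l * Qav Q s a)) (Q m s)) := by
  intro m D hD
  have hP := GoodP_opt hμ hb hτ hbτ hl0 hl1 hQ hD
  obtain ⟨α0, α, h0, h1, h2, h3, h4⟩ := hQ m D hD
  rw [mul_assoc]
  refine Bd.comp h0 h1 h2 h4 (by norm_num)
    (k := fun j ω => eS ω j + tv (opt τ (fun a => l * Qav Q ω.1 a) j)
      (opt τ (fun a => l * Qav Q ω.2 a) j)) (fun j => ?_) (fun ω => ?_)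
  · refine ((Bd.ind j).add (hP j)).mono (fun _ => le_refl _) (by linarith)
  · exact EE_Q_le (opt_dist _ _) (opt_dist _ _) h1 h3 _ _

/-- Average of local value functions. -/
def Vav (V : Fin n → (∀ j, S j) → ℝ) (s : ∀ j, S j) : ℝ := (1 / (n : ℝ)) * ∑ m, V m s

theorem Qf_Vav (γ : ℝ) (P : ∀ i : Fin n, (∀ j, S j) → A i → S i → ℝ)
    (r : ∀ i : Fin n, S i → A i → ℝ) (V : Fin n → (∀ j, S j) → ℝ) (s : ∀ j, S j) (a : ∀ i, A i) :
    Qf γ P r (Vav V) s a = Qav (Ql γ P r V) s a := by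
  unfold Qf Qav Ql rglob Vav
  rw [EE_smul, EE_sum, Finset.sum_add_distrib, ← Finset.mul_sum]
  ring

theorem Mval_scale (τ : ℝ) (Q : (∀ i, A i) → ℝ) (x y : ℝ) :
    (y - x) * EE (opt τ (fun a => x * Q a)) Q ≤
      Mval τ (fun a => y * Q a) - Mval τ (fun a => x * Q a) := by
  have h := opt_max τ (fun a => y * Q a) _ (opt_dist τ (fun a => x * Q a))
  unfold Mval
  have h2 : Fobj τ (fun a => y * Q a) (opt τ (fun a => x * Q a)) =
      Fobj τ (fun a => x * Q a) (opt τ (fun a => x * Q a)) +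
        (y - x) * EE (opt τ (fun a => x * Q a)) Q := by
    unfold Fobj
    rw [EE_smul, EE_smul]
    ring
  linarith

theorem interp (τ : ℝ) (Q : (∀ i, A i) → ℝ) {B : ℝ} (hB : ∀ a, |Q a| ≤ B) {N : ℕ} (hN : 0 < N) :
    |(1 / (N : ℝ)) * ∑ k ∈ Finset.range N, EE (opt τ (fun a => ((k + 1 : ℕ) / (N : ℝ)) * Q a)) Q -
      (Mval τ Q - Mval τ (fun _ : ∀ i, A i => 0))| ≤ 2 * B / N := by
  have hN' : (0 : ℝ) < N := Nat.cast_pos.2 hN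
  set E : ℕ → ℝ := fun k => EE (opt τ (fun a => ((k : ℕ) / (N : ℝ)) * Q a)) Q with hE
  set Φ : ℕ → ℝ := fun k => Mval τ (fun a => ((k : ℕ) / (N : ℝ)) * Q a) with hΦ
  have hΦN : Φ N = Mval τ Q := by
    simp only [hΦ, div_self hN'.ne', one_mul]
  have hΦ0 : Φ 0 = Mval τ (fun _ : ∀ i, A i => 0) := by
    simp only [hΦ, Nat.cast_zero, zero_div, zero_mul]
  have hlo : ∀ k, (1 / (N : ℝ)) * E k ≤ Φ (k + 1) - Φ k := by
    intro k
    have := Mval_scale τ Q ((k : ℕ) / (N : ℝ)) ((k + 1 : ℕ) / (N : ℝ))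
    refine le_trans (le_of_eq ?_) this
    simp only [hE]
    congr 1
    push_cast; field_simp; ring
  have hhi : ∀ k, Φ (k + 1) - Φ k ≤ (1 / (N : ℝ)) * E (k + 1) := by
    intro k
    have := Mval_scale τ Q ((k + 1 : ℕ) / (N : ℝ)) ((k : ℕ) / (N : ℝ))
    have h2 : ((k : ℕ) / (N : ℝ) - ((k + 1 : ℕ) / (N : ℝ))) = -(1 / (N : ℝ)) := by
      push_cast; field_simp; ring
    rw [h2] at this
    simp only [hΦ, hE]
    linarith
  have hsum : ∑ k ∈ Finset.range N, (Φ (k + 1) - Φ k) = Φ N - Φ 0 := Finset.sum_range_sub Φ N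
  have s1 := Finset.sum_le_sum fun k (_ : k ∈ Finset.range N) => hlo k
  have s2 := Finset.sum_le_sum fun k (_ : k ∈ Finset.range N) => hhi k
  rw [hsum, ← Finset.mul_sum] at s1 s2
  have s3 : ∑ k ∈ Finset.range N, (E (k + 1) - E k) = E N - E 0 := Finset.sum_range_sub E N
  rw [Finset.sum_sub_distrib] at s3
  have b1 := abs_le.1 (EE_abs_le (opt_dist τ (fun a => ((N : ℕ) / (N : ℝ)) * Q a)) hB)
  have b2 := abs_le.1 (EE_abs_le (opt_dist τ (fun a => ((0 : ℕ) / (N : ℝ)) * Q a)) hB)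
  change -B ≤ E N ∧ E N ≤ B at b1
  change -B ≤ E 0 ∧ E 0 ≤ B at b2
  have hB0 : 0 ≤ B := by linarith [b1.1, b1.2]
  rw [← hΦN, ← hΦ0]
  change |(1 / (N : ℝ)) * ∑ k ∈ Finset.range N, E (k + 1) - (Φ N - Φ 0)| ≤ _
  have s4 : (1 / (N : ℝ)) * ∑ k ∈ Finset.range N, E (k + 1) =
      (1 / (N : ℝ)) * ∑ k ∈ Finset.range N, E k + (1 / (N : ℝ)) * (E N - E 0) := by
    rw [← s3]; ring
  have s5 : (1 / (N : ℝ)) * (E N - E 0) ≤ 2 * B / N := by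
    rw [div_mul_eq_mul_div, one_mul]
    exact div_le_div_of_nonneg_right (by linarith [b1.2, b2.1]) hN'.le
  have s6 : 0 ≤ 2 * B / N := by positivity
  rw [abs_le]
  constructor <;> linarith

theorem GoodV.avg {G : SimpleGraph (Fin n)} {μ b : ℝ} {N : ℕ} (hN : 0 < N)
    {V : ℕ → Fin n → (∀ j, S j) → ℝ} (h : ∀ k ∈ Finset.range N, GoodV G μ b (V k)) :
    GoodV G μ b (fun m s => (1 / (N : ℝ)) * ∑ k ∈ Finset.range N, V k m s) := by
  have hN' : (0 : ℝ) < N := Nat.cast_pos.2 hN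
  intro m D hD
  refine ((Bd.sum (Finset.range N) fun k hk => h k hk m D hD).smul
    (c := 1 / (N : ℝ)) (by positivity)).mono (fun ω => le_of_eq ?_) (le_of_eq ?_)
  · simp only [Finset.sum_sub_distrib]; ring
  · simp only [Finset.sum_const, Finset.card_range, nsmul_eq_mul]; field_simp

/-- Normalized Bellman operator. -/
def Tt (γ τ : ℝ) (P : ∀ i : Fin n, (∀ j, S j) → A i → S i → ℝ) (r : ∀ i : Fin n, S i → A i → ℝ)
    (W : (∀ j, S j) → ℝ) (s : ∀ j, S j) : ℝ :=
  Mval τ (Qf γ P r W s) - Mval τ (fun _ : ∀ i, A i => 0)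

theorem stage [NeZero n] {G : SimpleGraph (Fin n)} {μ b γ τ : ℝ} (hμ : 0 ≤ μ) (hb : 0 ≤ b)
    (hτ : 0 < τ) (hbτ : 32 * b * 2 ^ μ ≤ τ) {P : ∀ i : Fin n, (∀ j, S j) → A i → S i → ℝ}
    {r : ∀ i : Fin n, S i → A i → ℝ} {V : Fin n → (∀ j, S j) → ℝ}
    (hQ : GoodQ G μ b (Ql γ P r V)) {η : ℝ} (hη : 0 < η) :
    ∃ V' : Fin n → (∀ j, S j) → ℝ, GoodV G μ (9 / 8 * b) V' ∧
      ∀ s, |Vav V' s - Tt γ τ P r (Vav V) s| ≤ η := by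
  obtain ⟨B, hB0, hB⟩ := exists_bound (fun x : (∀ j, S j) × (∀ j, A j) => Qav (Ql γ P r V) x.1 x.2)
  obtain ⟨N, hN⟩ := exists_nat_gt (2 * B / η)
  have hN0 : 0 < N := by
    rcases Nat.eq_zero_or_pos N with h | h
    · subst h
      have : 0 ≤ 2 * B / η := by positivity
      simp at hN; linarith
    · exact h
  have hN' : (0 : ℝ) < N := Nat.cast_pos.2 hN0
  refine ⟨_, GoodV.avg hN0 (V := fun k m s => EE (opt τ (fun a => ((k + 1 : ℕ) / (N : ℝ)) *
    Qav (Ql γ P r V) s a)) (Ql γ P r V m s)) (fun k hk => ?_), fun s => ?_⟩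
  · refine goodV_avg hμ hb hτ hbτ (by positivity) ?_ hQ
    rw [div_le_one hN']
    have := Finset.mem_range.1 hk
    exact_mod_cast this
  · have h1 := interp τ (Qav (Ql γ P r V) s) (B := B) (fun a => hB (s, a)) hN0
    have h2 : 2 * B / N ≤ η := by
      rw [div_lt_iff₀ hη] at hN
      rw [div_le_iff₀ hN']; linarith
    refine le_trans (le_of_eq ?_) (h1.trans h2)
    congr 1
    unfold Tt Vav
    congr 1
    · rw [Finset.mul_sum]
      have : ∀ k ∈ Finset.range N, EE (opt τ (fun a => ((k + 1 : ℕ) / (N : ℝ)) *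
          Qav (Ql γ P r V) s a)) (Qav (Ql γ P r V) s) = (1 / (n : ℝ)) * ∑ m,
          EE (opt τ (fun a => ((k + 1 : ℕ) / (N : ℝ)) *
          Qav (Ql γ P r V) s a)) (Ql γ P r V m s) := by
        intro k _
        rw [← EE_sum, ← EE_smul]
        rfl
      rw [Finset.sum_congr rfl this, ← Finset.mul_sum, ← Finset.mul_sum, ← Finset.mul_sum,
        Finset.sum_comm]
      ring
    · congr 2
      funext a
      exact Qf_Vav γ P r V s a

theorem Tt_lip {γ τ : ℝ} (hγ : 0 ≤ γ) {P : ∀ i : Fin n, (∀ j, S j) → A i → S i → ℝ}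
    (hP : IsKernel P) (r : ∀ i : Fin n, S i → A i → ℝ) {W W' : (∀ j, S j) → ℝ} {δ : ℝ}
    (h : ∀ s, W s ≤ W' s + δ) (s : ∀ j, S j) : Tt γ τ P r W s ≤ Tt γ τ P r W' s + γ * δ := by
  unfold Tt
  have := Mval_lip τ (Q := Qf γ P r W s) (Q' := Qf γ P r W' s) (c := γ * δ) (fun a => by
    unfold Qf
    have h1 := EE_mono (p := fun i => P i s (a i)) (fun i => hP i _ _) h
    rw [EE_add, EE_const (p := fun i => P i s (a i)) (fun i => hP i _ _)] at h1
    nlinarith)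
  linarith

theorem approx_fix [NeZero n] {G : SimpleGraph (Fin n)} [DecidableRel G.Adj]
    {P : ∀ i : Fin n, (∀ j, S j) → A i → S i → ℝ} (hP : IsKernel P) (hloc : IsLocalKernel G P)
    {r : ∀ i : Fin n, S i → A i → ℝ} {rbar : ℝ}
    (hr : ∀ i si ai, 0 ≤ r i si ai ∧ r i si ai ≤ rbar) (hrbar : 0 ≤ rbar)
    {γ : ℝ} (hγ : 0 ≤ γ) (hγ1 : γ < 1) {μ : ℝ} (hμ : 0 ≤ μ)
    (hC : ∀ i, 2 ^ μ * ∑ j, Cmat G P i j ≤ 1) {b τ : ℝ} (hb : 0 ≤ b)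
    (hτ : 0 < τ) (hbτ : 32 * b * 2 ^ μ ≤ τ) (hbb : rbar + γ * (9 / 8 * b) = b)
    {ε : ℝ} (hε : 0 < ε) :
    ∃ V : Fin n → (∀ j, S j) → ℝ, GoodV G μ (9 / 8 * b) V ∧
      ∀ s, |Vav V s - Tt γ τ P r (Vav V) s| ≤ ε := by
  have hQ : ∀ V : Fin n → (∀ j, S j) → ℝ, GoodV G μ (9 / 8 * b) V → GoodQ G μ b (Ql γ P r V) := by
    intro V hV
    have := goodQ_of_goodV G hP hloc hr hrbar hγ hμ hC hV
    rwa [hbb] at this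
  have step : ∀ (V : Fin n → (∀ j, S j) → ℝ) (δ : ℝ), 0 < δ → GoodV G μ (9 / 8 * b) V →
      (∀ s, |Vav V s - Tt γ τ P r (Vav V) s| ≤ δ) → ∃ V' : Fin n → (∀ j, S j) → ℝ,
      GoodV G μ (9 / 8 * b) V' ∧
      ∀ s, |Vav V' s - Tt γ τ P r (Vav V') s| ≤ (1 + γ) / 2 * δ := by
    intro V δ hδ hV hVδ
    obtain ⟨V', hV', h'⟩ := stage hμ hb hτ hbτ (hQ V hV) (η := δ * (1 - γ) / 4)
      (by have : 0 < 1 - γ := by linarith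
          positivity)
    refine ⟨V', hV', fun s => ?_⟩
    have hdiff : ∀ s, |Vav V' s - Vav V s| ≤ δ + δ * (1 - γ) / 4 := by
      intro s
      have a1 := abs_le.1 (h' s)
      have a2 := abs_le.1 (hVδ s)
      rw [abs_le]; constructor <;> linarith
    have l1 := Tt_lip (τ := τ) hγ hP r (W := Vav V) (W' := Vav V') (δ := δ + δ * (1 - γ) / 4)
      (fun s => by linarith [(abs_le.1 (hdiff s)).1]) s
    have l2 := Tt_lip (τ := τ) hγ hP r (W := Vav V') (W' := Vav V) (δ := δ + δ * (1 - γ) / 4)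
      (fun s => by linarith [(abs_le.1 (hdiff s)).2]) s
    have a1 := abs_le.1 (h' s)
    have hq : δ * (1 - γ) / 4 + γ * (δ + δ * (1 - γ) / 4) ≤ (1 + γ) / 2 * δ := by
      nlinarith [mul_nonneg hδ.le (mul_self_nonneg (1 - γ))]
    rw [abs_le]; constructor <;> linarith
  have h0 : GoodV G μ (9 / 8 * b) (fun (_ : Fin n) (_ : ∀ j, S j) => (0 : ℝ)) := by
    intro m D hD
    have := uw_pos μ D m
    exact Bd.zero.mono (fun _ => by simp) (by positivity)
  obtain ⟨B, hB0, hB⟩ := exists_bound (fun s => Vav (fun (_ : Fin n) (_ : ∀ j, S j) => (0 : ℝ)) s -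
    Tt γ τ P r (Vav (fun (_ : Fin n) (_ : ∀ j, S j) => (0 : ℝ))) s)
  have hiter : ∀ k : ℕ, ∃ V : Fin n → (∀ j, S j) → ℝ, GoodV G μ (9 / 8 * b) V ∧
      ∀ s, |Vav V s - Tt γ τ P r (Vav V) s| ≤ ((1 + γ) / 2) ^ k * (B + 1) := by
    intro k
    induction k with
    | zero => exact ⟨_, h0, fun s => by rw [pow_zero, one_mul]; linarith [hB s]⟩
    | succ k ih =>
      obtain ⟨V, hV, hV2⟩ := ih
      obtain ⟨V', h1, h2⟩ := step V _ (by positivity) hV hV2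
      exact ⟨V', h1, fun s => (h2 s).trans (le_of_eq (by ring))⟩
  obtain ⟨k, hk⟩ := exists_pow_lt_of_lt_one (show (0 : ℝ) < ε / (B + 1) by positivity)
    (show (1 + γ) / 2 < 1 by linarith)
  obtain ⟨V, h1, h2⟩ := hiter k
  refine ⟨V, h1, fun s => (h2 s).trans ?_⟩
  rw [lt_div_iff₀ (by positivity)] at hk
  exact hk.le

theorem tv_osc {p q : ∀ i, A i → ℝ} (hp : ∀ i, IsDist (p i)) (hq : ∀ i, IsDist (q i)) (i : Fin n)
    {f : A i → ℝ} {o : ℝ} (ho : 0 ≤ o) (h : ∀ a b, f a - f b ≤ o) :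
    ∑ a, p i a * f a - ∑ a, q i a * f a ≤ o * tv (p i) (q i) := by
  have := EE_couple hp hq (f := fun x => f (x i)) (g := fun x => f (x i)) (c := 0)
    (α := fun j => if j = i then o else 0) (fun j => by split_ifs <;> linarith) (by
      intro x y
      simp only [ite_mul, zero_mul, Finset.sum_ite_eq', Finset.mem_univ, if_true, zero_add]
      by_cases hxy : x i = y i
      · simp [hxy]
      · simp only [ne_eq, hxy, not_false_eq_true, if_true, mul_one]; exact h _ _)
  rw [EE_marg hp, EE_marg hq] at this
  simpa using this

theorem F_gap [NeZero n] {G : SimpleGraph (Fin n)} {μ b τ θ : ℝ} (hτ : 0 < τ) (hθ : 0 ≤ θ)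
    {Q : Fin n → (∀ j, S j) → (∀ j, A j) → ℝ} (hQ : GoodQ G μ b Q) (s : ∀ j, S j)
    (t : Fin n → ∀ j, S j)
    (ht : ∀ i, tv (opt τ (Qav Q s) i) (opt τ (Qav Q (t i)) i) ≤ θ) :
    Mval τ (Qav Q s) - 2 * b * θ ≤ Fobj τ (Qav Q s) (fun i => opt τ (Qav Q (t i)) i) := by
  have hn : (0 : ℝ) < n := Nat.cast_pos.2 (Nat.pos_of_ne_zero (NeZero.ne n))
  have hG := fun m => hQ m (fun _ => 0) (fun _ _ _ => Nat.zero_le _)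
  have hu : ∀ j : Fin n, uw μ (fun _ => 0) j = 1 := fun j => by simp [uw]
  simp only [Bd, hu, mul_one] at hG
  choose α0 α h0 h1 h2 h3 h4 using hG
  have h2' : ∀ m, α0 m = 0 := fun m => h2 m (fun _ => trivial)
  simp only [h2', zero_add] at h3 h4
  set p : ∀ i, A i → ℝ := opt τ (Qav Q s) with hp
  set q : ∀ i, A i → ℝ := fun i => opt τ (Qav Q (t i)) i with hq
  have hpd : ∀ i, IsDist (p i) := opt_dist _ _
  have hqd : ∀ i, IsDist (q i) := fun i => opt_dist _ _ i
  have hEm : ∀ m, EE p (Q m s) - EE q (Q m s) ≤ b * θ := by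
    intro m
    refine (EE_Q_le (α0 := 0) hpd hqd (h1 m) (by simpa only [zero_add] using h3 m) s s).trans ?_
    have : ∀ j, α m j * (eS (s, s) j + tv (p j) (q j)) ≤ α m j * θ := fun j => by
      have e : eS (s, s) j = 0 := by simp [eS]
      rw [e, zero_add]
      exact mul_le_mul_of_nonneg_left (ht j) (h1 m j)
    rw [zero_add]
    refine (Finset.sum_le_sum fun j _ => this j).trans ?_
    rw [← Finset.sum_mul]
    exact mul_le_mul_of_nonneg_right (h4 m) hθ
  have hE : EE p (Qav Q s) - EE q (Qav Q s) ≤ b * θ := by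
    have hav : ∀ p : ∀ i, A i → ℝ, EE p (Qav Q s) = 1 / n * ∑ m, EE p (Q m s) := by
      intro p
      rw [← EE_sum, ← EE_smul]; rfl
    rw [hav, hav, ← mul_sub, ← Finset.sum_sub_distrib]
    have := Finset.sum_le_sum fun m (_ : m ∈ Finset.univ) => hEm m
    simp only [Finset.sum_const, Finset.card_univ, Fintype.card_fin, nsmul_eq_mul] at this
    rw [one_div, inv_mul_le_iff₀ hn]
    exact this
  have hH : ∀ i, τ * (Hent (p i) - Hent (q i)) ≤ (1 / n * ∑ m, α m i) * θ := by
    intro i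
    obtain ⟨sm1, sm2⟩ := opt_softmax hτ (Qav Q (t i)) i
    have g := gibbs (hpd i) (hqd i) sm1
    have ho : 0 ≤ 1 / (n : ℝ) * ∑ m, α m i :=
      mul_nonneg (by positivity) (Finset.sum_nonneg fun m _ => h1 m i)
    have hosc : ∀ a c, (-(τ * Real.log (q i a))) - (-(τ * Real.log (q i c))) ≤
        1 / n * ∑ m, α m i := by
      intro a c
      have e := sm2 c a
      have hav : ∀ p : ∀ i, A i → ℝ, EE p (Qav Q (t i)) = 1 / n * ∑ m, EE p (Q m (t i)) := by
        intro p
        rw [← EE_sum, ← EE_smul]; rfl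
      rw [hav, hav, ← mul_sub, ← Finset.sum_sub_distrib] at e
      have : τ * (Real.log (q i c) - Real.log (q i a)) ≤ 1 / n * ∑ m, α m i := by
        refine e.le.trans ?_
        apply mul_le_mul_of_nonneg_left _ (by positivity)
        apply Finset.sum_le_sum
        intro m _
        refine (EE_Q_le (α0 := 0) (upd_dist (opt_dist _ _) i (pt_dist _))
          (upd_dist (opt_dist _ _) i (pt_dist _)) (h1 m)
          (by simpa only [zero_add] using h3 m) (t i) (t i)).trans ?_
        rw [zero_add, Finset.sum_eq_single i]
        · simp only [Function.update_self]
          have := tv_le_one (pt_dist c) (pt_dist a)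
          have h5 : eS (t i, t i) i = 0 := by simp [eS]
          rw [h5]
          nlinarith [h1 m i]
        · intro j _ hj
          simp [Function.update_of_ne hj, tv_self, eS]
        · simp
      linarith
    have o := tv_osc hpd hqd i ho hosc
    have e1 : ∀ p : A i → ℝ, ∑ a, p a * (-(τ * Real.log (q i a))) =
        -(τ * ∑ a, p a * Real.log (q i a)) := by
      intro p
      rw [Finset.mul_sum, ← Finset.sum_neg_distrib]
      exact Finset.sum_congr rfl fun a _ => by ring
    rw [e1, e1] at o
    have e2 : Hent (q i) = - ∑ a, q i a * Real.log (q i a) := by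
      unfold Hent
      rw [← Finset.sum_neg_distrib]
      exact Finset.sum_congr rfl fun a _ => by rw [Real.negMulLog]; ring
    have e3 := mul_le_mul_of_nonneg_left (ht i) ho
    have e4 : τ * Hent (p i) ≤ τ * (- ∑ a, p i a * Real.log (q i a)) :=
      mul_le_mul_of_nonneg_left g hτ.le
    rw [e2]
    have e5 : (1 / (n : ℝ) * ∑ m, α m i) * tv (p i) (q i) ≤ (1 / n * ∑ m, α m i) * θ := e3
    linarith
  have hHs : τ * ∑ i, Hent (p i) - τ * ∑ i, Hent (q i) ≤ b * θ := by
    have := Finset.sum_le_sum fun i (_ : i ∈ Finset.univ) => hH i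
    rw [← Finset.mul_sum, Finset.sum_sub_distrib, ← Finset.sum_mul, ← Finset.mul_sum,
      Finset.sum_comm] at this
    have h5 : ∑ m, ∑ i, α m i ≤ n * b := by
      have := Finset.sum_le_sum fun m (_ : m ∈ Finset.univ) => h4 m
      simpa using this
    have h6 : 1 / (n : ℝ) * ∑ m, ∑ i, α m i ≤ b := by
      rw [one_div, inv_mul_le_iff₀ hn]; exact h5
    have := mul_le_mul_of_nonneg_right h6 hθ
    linarith
  unfold Mval Fobj
  rw [← hp]
  linarith

/-- Truncation of a state to a ball. -/
def trunc (G : SimpleGraph (Fin n)) (κ : ℕ) (i : Fin n) (s : ∀ j, S j) (j : Fin n) : S j :=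
  if G.dist i j ≤ κ then s j else Classical.arbitrary (S j)

theorem EL_dist (G : SimpleGraph (Fin n)) (K : ℕ) (i : Fin n) :
    EL G (fun j => K - G.dist i j) := by
  intro j k hjk
  have : G.dist i k ≤ G.dist i j + 1 := by
    by_cases h : G.Reachable i j
    · obtain ⟨w, hw⟩ := h.exists_walk_length_eq_dist
      have := G.dist_le (w.concat hjk)
      rwa [SimpleGraph.Walk.length_concat, hw] at this
    · have h2 : ¬ G.Reachable i k := fun h2 => h (h2.trans hjk.symm.reachable)
      rw [SimpleGraph.dist_eq_zero_of_not_reachable h2]; omega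
  simp only
  omega

theorem tv_trunc {G : SimpleGraph (Fin n)} {μ θ : ℝ} {ζ : (∀ j, S j) → ∀ i, A i → ℝ} (κ : ℕ)
    (i : Fin n) (h : GoodP (fun j => κ + 1 - G.dist i j) μ θ ζ) (s : ∀ j, S j) :
    tv (ζ s i) (ζ (trunc G κ i s) i) ≤ θ * ((κ : ℝ) + 2) ^ (-μ) := by
  obtain ⟨α0, α, h0, h1, h2, h3, h4⟩ := h i
  refine (h3 (s, trunc G κ i s)).trans ?_
  have e1 : uw μ (fun j => κ + 1 - G.dist i j) i = ((κ : ℝ) + 2) ^ (-μ) := by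
    unfold uw
    congr 1
    simp only [SimpleGraph.dist_self]
    push_cast; ring
  rw [e1] at h4
  refine le_trans ?_ h4
  gcongr with j _
  · exact h1 j
  · unfold eS trunc
    by_cases hd : G.dist i j ≤ κ
    · simp only [hd, if_true, ne_eq, not_true_eq_false, if_false]
      exact (uw_pos _ _ _).le
    · have : κ + 1 - G.dist i j = 0 := by omega
      have hu : uw μ (fun j => κ + 1 - G.dist i j) j = 1 := by
        unfold uw; simp only [this]; simp
      rw [hu]
      split_ifs <;> norm_num

theorem core [NeZero n] {G : SimpleGraph (Fin n)} [DecidableRel G.Adj]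
    {P : ∀ i : Fin n, (∀ j, S j) → A i → S i → ℝ} (hP : IsKernel P) (hloc : IsLocalKernel G P)
    {r : ∀ i : Fin n, S i → A i → ℝ} {rbar : ℝ}
    (hr : ∀ i si ai, 0 ≤ r i si ai ∧ r i si ai ≤ rbar) (hrbar : 0 ≤ rbar)
    {γ : ℝ} (hγ : 0 < γ) (hγ1 : γ < 1) {μ : ℝ} (hμ : 0 ≤ μ)
    (hC : ∀ i, 2 ^ μ * ∑ j, Cmat G P i j ≤ 1) {b τ : ℝ} (hb : 0 ≤ b)
    (hτ : 0 < τ) (hbτ : 32 * b * 2 ^ μ ≤ τ) (hbb : rbar + γ * (9 / 8 * b) = b)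
    {ρ : (∀ j, S j) → ℝ} (hρ : IsDist ρ) (κ : ℕ)
    {ε : ℝ} (hε : 0 < ε) :
    ∃ ζhat : ∀ i : Fin n, (∀ j, S j) → A i → ℝ,
      IsPolicy ζhat ∧ IsKHop G κ ζhat ∧
      ∀ ζ : ∀ i : Fin n, (∀ j, S j) → A i → ℝ, IsPolicy ζ →
        Jobj γ τ P r ζ ρ - Jobj γ τ P r ζhat ρ ≤
          (2 * ε + b * ((κ : ℝ) + 2) ^ (-μ) / 4) / (1 - γ) := by
  obtain ⟨V, hV, hVε⟩ := approx_fix hP hloc hr hrbar hγ.le hγ1 hμ hC hb hτ hbτ hbb hε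
  have hQ := goodQ_of_goodV G hP hloc hr hrbar hγ.le hμ hC hV
  rw [hbb] at hQ
  set Q := Ql γ P r V with hQdef
  have hkhop : IsKHop G κ (fun i (s : ∀ j, S j) => opt τ (Qav Q (trunc G κ i s)) i) := by
    intro i s s' h
    have : trunc G κ i s = trunc G κ i s' := by
      funext j
      unfold trunc
      split_ifs with hd
      · exact h j hd
      · rfl
    simp only [this]
  have hpol : IsPolicy (fun i (s : ∀ j, S j) => opt τ (Qav Q (trunc G κ i s)) i) :=
    fun i s => opt_dist _ _ i
  refine ⟨_, hpol, hkhop, fun ζ hζ => ?_⟩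
  set c0 : ℝ := Mval τ (fun _ : ∀ i, A i => 0) with hc0
  have h1γ : 0 < 1 - γ := by linarith
  set c : ℝ := c0 / (1 - γ) with hc
  have hcc : c0 + γ * c = c := by rw [hc]; field_simp; ring
  set W : (∀ j, S j) → ℝ := fun s => Vav V s + c with hW
  have hQW : ∀ s, Qf γ P r W s = fun a => Qav Q s a + γ * c := by
    intro s
    funext a
    rw [hQdef, ← Qf_Vav]
    unfold Qf
    rw [hW, EE_add, EE_const (p := fun i => P i s (a i)) (fun i => hP i _ _)]
    ring
  have hQV : ∀ s, Qf γ P r (Vav V) s = Qav Q s := fun s => funext fun a => Qf_Vav γ P r V s a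
  set θ : ℝ := 1 / 8 * ((κ : ℝ) + 2) ^ (-μ) with hθ
  have hθ0 : 0 ≤ θ := by positivity
  have := J_gap (τ := τ) hγ hγ1 hP hρ hζ hpol W ε (ε + 2 * b * θ) (r := r) (by
    intro s
    have e := abs_le.1 (hVε s)
    rw [hQW, Mval_add_const]
    unfold Tt at e
    rw [hQV] at e
    simp only [hW]
    linarith [e.1]) (by
    intro s
    have e := abs_le.1 (hVε s)
    unfold Tt at e
    rw [hQV] at e
    rw [hQW, Fobj_add_const _ _ _ _ (fun i => hpol i s)]
    have F := F_gap hτ hθ0 hQ s (fun i => trunc G κ i s) (fun i => by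
      have hg := GoodP_opt hμ hb hτ hbτ zero_le_one (le_refl 1) hQ (EL_dist G (κ + 1) i)
      simp only [one_mul] at hg
      exact tv_trunc κ i hg s)
    simp only [hW]
    linarith [e.2])
  refine this.trans (le_of_eq ?_)
  rw [hθ]
  ring

theorem case_zero {γ τ : ℝ} (hγ0 : 0 < γ) (hγ : γ < 1)
    {P : ∀ i : Fin n, (∀ j, S j) → A i → S i → ℝ} (hP : IsKernel P)
    {r : ∀ i : Fin n, S i → A i → ℝ} (hr : ∀ i si ai, r i si ai = 0)
    {ρ : (∀ j, S j) → ℝ} (hρ : IsDist ρ)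
    {ζ : ∀ i : Fin n, (∀ j, S j) → A i → ℝ} (hζ : IsPolicy ζ) :
    Jobj γ τ P r ζ ρ -
      Jobj γ τ P r (fun i _ => opt τ (fun _ : ∀ i, A i => (0 : ℝ)) i) ρ ≤ 0 := by
  have h1γ : 0 < 1 - γ := by linarith
  set c0 : ℝ := Mval τ (fun _ : ∀ i, A i => 0) with hc0
  set c : ℝ := c0 / (1 - γ) with hc
  have hcc : c0 + γ * c = c := by rw [hc]; field_simp; ring
  have hpol : IsPolicy (fun i (_ : ∀ j, S j) => opt τ (fun _ : ∀ i, A i => (0 : ℝ)) i) :=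
    fun i s => opt_dist _ _ i
  have hQ : ∀ s, Qf γ P r (fun _ => c) s = fun _ => 0 + γ * c := by
    intro s
    funext a
    unfold Qf rglob
    rw [EE_const (p := fun i => P i s (a i)) (fun i => hP i _ _)]
    simp [hr]
  have := J_gap (τ := τ) hγ0 hγ hP hρ hζ hpol (fun _ => c) 0 0 (r := r)
    (fun s => by rw [hQ, Mval_add_const]; linarith)
    (fun s => by
      rw [hQ, Fobj_add_const _ _ _ _ (fun i => hpol i s)]
      change c - 0 ≤ c0 + γ * c
      linarith)
  simpa using this

theorem policy_subsingleton (h : Amax A ≤ 1) {ζ ζ' : ∀ i : Fin n, (∀ j, S j) → A i → ℝ}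
    (hζ : IsPolicy ζ) (hζ' : IsPolicy ζ') : ζ = ζ' := by
  funext i s a
  have hc : Fintype.card (A i) ≤ 1 :=
    (Finset.le_sup (f := fun i => Fintype.card (A i)) (Finset.mem_univ i)).trans h
  have : Subsingleton (A i) := Fintype.card_le_one_iff_subsingleton.1 hc
  have h1 := (hζ i s).2
  have h2 := (hζ' i s).2
  rw [Fintype.sum_subsingleton _ a] at h1 h2
  rw [h1, h2]


/-- near-optimality of `κ`-hop policies: under `γ < 0.8`,
`τ ≥ 6 r̄ A_max² e (4−3γ)/(4−5γ)` and `∑_{j∈N_i} C_{ij} < 1/2` for all `i`, for every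
`κ` there exists a `κ`-hop joint policy `ζ̂` such that, for every joint policy `ζ`,
`J(ζ) − J(ζ̂) ≤ ( r̄(4−3γ) / ((1−γ)(4−5γ)) ) / (κ+1)^μ`, where
`μ = min( log₂(τ(4−5γ)/(6 r̄ A_max² e (4−3γ))), log₂(1/(2 max_i ∑_{j∈N_i} C_{ij})) )`. -/
theorem stmt_3 {n : ℕ} [NeZero n] (G : SimpleGraph (Fin n)) [DecidableRel G.Adj]
    (S A : Fin n → Type)
    [∀ i, Fintype (S i)] [∀ i, Fintype (A i)]
    [∀ i, DecidableEq (S i)] [∀ i, DecidableEq (A i)]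
    [∀ i, Nonempty (S i)] [∀ i, Nonempty (A i)]
    (P : ∀ i : Fin n, (∀ j, S j) → A i → S i → ℝ)
    (hP : IsKernel P) (hPloc : IsLocalKernel G P)
    (r : ∀ i : Fin n, S i → A i → ℝ) (rbar : ℝ)
    (hr : ∀ i si ai, 0 ≤ r i si ai ∧ r i si ai ≤ rbar)
    (γ τ : ℝ) (hγ0 : 0 < γ) (hγ : γ < 0.8)
    (hτ : 6 * rbar * ((Amax A : ℝ)) ^ 2 * Real.exp 1 * (4 - 3 * γ) / (4 - 5 * γ) ≤ τ)
    (hC : ∀ i, ∑ j, Cmat G P i j < 1 / 2)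
    (ρ : (∀ j, S j) → ℝ) (hρ : IsDist ρ)
    (κ : ℕ) :
    ∃ ζhat : ∀ i : Fin n, (∀ j, S j) → A i → ℝ,
      IsPolicy ζhat ∧ IsKHop G κ ζhat ∧
      ∀ ζ : ∀ i : Fin n, (∀ j, S j) → A i → ℝ, IsPolicy ζ →
        Jobj γ τ P r ζ ρ - Jobj γ τ P r ζhat ρ ≤
          (rbar * (4 - 3 * γ) / ((1 - γ) * (4 - 5 * γ))) *
            (1 / ((κ : ℝ) + 1) ^
              (min
                (Real.logb 2
                  (τ * (4 - 5 * γ) /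
                    (6 * rbar * ((Amax A : ℝ)) ^ 2 * Real.exp 1 * (4 - 3 * γ))))
                (Real.logb 2
                  (1 / (2 * ⨆ i : Fin n, ∑ j, Cmat G P i j))))) := by
  have hn0 : 0 < n := Nat.pos_of_ne_zero (NeZero.ne n)
  let i0 : Fin n := ⟨0, hn0⟩
  have hrbar : 0 ≤ rbar := by
    have := hr i0 (Classical.arbitrary _) (Classical.arbitrary _)
    linarith [this.1, this.2]
  have hγ8 : γ < 8 / 10 := by norm_num at hγ ⊢; linarith
  have hγ1 : γ < 1 := by linarith
  have h1γ : 0 < 1 - γ := by linarith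
  have h45 : 0 < 4 - 5 * γ := by linarith
  have h43 : 0 < 4 - 3 * γ := by linarith
  set μ : ℝ := min
                (Real.logb 2
                  (τ * (4 - 5 * γ) /
                    (6 * rbar * ((Amax A : ℝ)) ^ 2 * Real.exp 1 * (4 - 3 * γ))))
                (Real.logb 2
                  (1 / (2 * ⨆ i : Fin n, ∑ j, Cmat G P i j))) with hμdef
  have hpow : 0 < 1 / ((κ : ℝ) + 1) ^ μ := by positivity
  rcases hrbar.eq_or_lt with hr0 | hrpos
  · refine ⟨fun i _ => opt τ (fun _ : ∀ i, A i => (0 : ℝ)) i, fun i s => opt_dist _ _ i,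
      fun i s s' _ => rfl, fun ζ hζ => ?_⟩
    have := case_zero (τ := τ) hγ0 hγ1 hP (r := r)
      (fun i si ai => le_antisymm (by rw [hr0]; exact (hr i si ai).2) (hr i si ai).1) hρ hζ
    rw [← hr0]
    simpa using this
  by_cases hA : Amax A ≤ 1
  · have hpol : IsPolicy (fun i (_ : ∀ j, S j) => opt τ (fun _ : ∀ i, A i => (0 : ℝ)) i) :=
      fun i s => opt_dist _ _ i
    refine ⟨_, hpol, fun i s s' _ => rfl, fun ζ hζ => ?_⟩
    rw [policy_subsingleton hA hζ hpol, sub_self]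
    positivity
  have hA2 : (2 : ℝ) ≤ Amax A := by
    have : 2 ≤ Amax A := by omega
    exact_mod_cast this
  have hA4 : (4 : ℝ) ≤ (Amax A : ℝ) ^ 2 := by nlinarith
  have hApos : (0 : ℝ) < (Amax A : ℝ) ^ 2 := by linarith
  have he : (2.7 : ℝ) < Real.exp 1 := by
    have := Real.exp_one_gt_d9
    norm_num at this ⊢; linarith
  have hepos := Real.exp_pos 1
  set K : ℝ := 6 * rbar * ((Amax A : ℝ)) ^ 2 * Real.exp 1 * (4 - 3 * γ) with hK
  have hKpos : 0 < K := by positivity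
  have hτ' : K ≤ τ * (4 - 5 * γ) := by rwa [div_le_iff₀ h45] at hτ
  have hτpos : 0 < τ := lt_of_lt_of_le (by positivity) hτ
  set M : ℝ := ⨆ i : Fin n, ∑ j, Cmat G P i j with hM
  have hMle : ∀ i, ∑ j, Cmat G P i j ≤ M := fun i =>
    le_ciSup (f := fun i => ∑ j, Cmat G P i j) (Set.finite_range _).bddAbove i
  have : Nonempty (Fin n) := ⟨i0⟩
  have hM2 : M ≤ 1 / 2 := ciSup_le fun i => (hC i).le
  have hM0 : 0 ≤ M := (Finset.sum_nonneg fun j _ => Cmat_nonneg G P i0 j).trans (hMle i0)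
  have hx1 : 1 ≤ τ * (4 - 5 * γ) / K := by rwa [le_div_iff₀ hKpos, one_mul]
  have hμ0 : 0 ≤ μ := by
    rw [hμdef]
    refine le_min (Real.logb_nonneg (by norm_num) hx1) ?_
    rcases hM0.eq_or_lt with h | h
    · rw [← h]; simp
    · apply Real.logb_nonneg (by norm_num)
      rw [le_div_iff₀ (by positivity)]; linarith
  have h2μ1 : (2 : ℝ) ^ μ ≤ τ * (4 - 5 * γ) / K := by
    rw [← Real.le_logb_iff_rpow_le (by norm_num) (by linarith)]
    exact min_le_left _ _
  have h2pos : (0 : ℝ) < 2 ^ μ := by positivity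
  have h2μ2 : ∀ i, 2 ^ μ * ∑ j, Cmat G P i j ≤ 1 := by
    intro i
    refine (mul_le_mul_of_nonneg_left (hMle i) h2pos.le).trans ?_
    rcases hM0.eq_or_lt with h | h
    · rw [← h]; simp
    · have : (2 : ℝ) ^ μ ≤ 1 / (2 * M) := by
        rw [← Real.le_logb_iff_rpow_le (by norm_num) (by positivity)]
        exact min_le_right _ _
      rw [le_div_iff₀ (by positivity)] at this
      nlinarith
  have h89 : 0 < 8 - 9 * γ := by linarith
  set g : ℝ := (4 - 3 * γ) / (4 - 5 * γ) with hg
  have hgpos : 0 < g := by positivity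
  set b : ℝ := 8 * rbar / (8 - 9 * γ) with hb
  have hbpos : 0 < b := by positivity
  have hbb : rbar + γ * (9 / 8 * b) = b := by
    have h8 : b * (8 - 9 * γ) = 8 * rbar := by rw [hb]; exact div_mul_cancel₀ _ h89.ne'
    linarith
  have hbg : b ≤ 2 * rbar * g := by
    rw [hb, hg, mul_div_assoc', div_le_div_iff₀ h89 h45]
    have : 0 ≤ 16 - 40 * γ + 27 * γ ^ 2 := by nlinarith [sq_nonneg (27 * γ - 20)]
    nlinarith
  have hbτ : 32 * b * 2 ^ μ ≤ τ := by
    rw [le_div_iff₀ hKpos] at h2μ1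
    have h64 : 64 * rbar * (4 - 3 * γ) ≤ K := by
      have h1 : (64 : ℝ) ≤ 6 * (Amax A : ℝ) ^ 2 * Real.exp 1 := by nlinarith
      have h2 : 0 < rbar * (4 - 3 * γ) := by positivity
      rw [hK]; nlinarith
    have h3 : 2 ^ μ * (64 * rbar * (4 - 3 * γ)) ≤ τ * (4 - 5 * γ) :=
      (mul_le_mul_of_nonneg_left h64 h2pos.le).trans h2μ1
    have h4 : 32 * b * 2 ^ μ ≤ 32 * (2 * rbar * g) * 2 ^ μ := by gcongr
    refine h4.trans ?_
    rw [hg, show 32 * (2 * rbar * ((4 - 3 * γ) / (4 - 5 * γ))) * 2 ^ μ =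
      2 ^ μ * (64 * rbar * (4 - 3 * γ)) / (4 - 5 * γ) by ring, div_le_iff₀ h45]
    exact h3
  have hε : 0 < rbar * g * (1 / ((κ : ℝ) + 1) ^ μ) / 4 := by positivity
  obtain ⟨ζhat, hz1, hz2, hz3⟩ := core hP hPloc hr hrbar hγ0 hγ1 hμ0 h2μ2 hbpos.le hτpos hbτ hbb
    hρ κ hε
  refine ⟨ζhat, hz1, hz2, fun ζ hζ => (hz3 ζ hζ).trans ?_⟩
  rw [show rbar * (4 - 3 * γ) / ((1 - γ) * (4 - 5 * γ)) * (1 / ((κ : ℝ) + 1) ^ μ) =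
    (rbar * g * (1 / ((κ : ℝ) + 1) ^ μ)) / (1 - γ) by rw [hg]; field_simp]
  apply div_le_div_of_nonneg_right _ h1γ.le
  have hk : ((κ : ℝ) + 2) ^ (-μ) ≤ 1 / ((κ : ℝ) + 1) ^ μ := by
    rw [Real.rpow_neg (by positivity), ← one_div]
    apply one_div_le_one_div_of_le (by positivity)
    exact Real.rpow_le_rpow (by positivity) (by linarith) hμ0
  have h5 : b * ((κ : ℝ) + 2) ^ (-μ) ≤ (2 * rbar * g) * (1 / ((κ : ℝ) + 1) ^ μ) := by
    gcongr
  linarith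

end LPI
end
end

section
/- Let A ∈ ℝ^{n×n} be a (ν,μ)-decay matrix and A' ∈ ℝ^{n×n} be a (ν',μ)-decay matrix, both with respect to the same graph distance. Then the matrix product AA' is (νν', μ)-decay. -/
open scoped BigOperators

noncomputable section

/-- A `(ν,μ)`-decay matrix with respect to a distance function `dist`. -/
def IsDecayMat {n : ℕ} (dist : Fin n → Fin n → ℕ) (ν μ : ℝ)
    (M : Fin n → Fin n → ℝ) : Prop :=
  (∀ i j, 0 ≤ M i j) ∧
  (∀ i, ∑ j, M i j * ((dist i j : ℝ) + 1) ^ μ ≤ ν) ∧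
  (∀ j, ∑ i, M i j * ((dist i j : ℝ) + 1) ^ μ ≤ ν)

/-- the product `A * A'` of a `(ν,μ)`-decay matrix and a
`(ν',μ)`-decay matrix is `(νν', μ)`-decay. -/
theorem stmt_6 (n : ℕ) (dist : Fin n → Fin n → ℕ)
    (hdist_self : ∀ i, dist i i = 0)
    (hdist_symm : ∀ i j, dist i j = dist j i)
    (hdist_tri : ∀ i j k, dist i k ≤ dist i j + dist j k)
    (ν ν' μ : ℝ) (hν : 0 < ν) (hν' : 0 < ν') (hμ : 0 < μ)
    (A A' : Fin n → Fin n → ℝ)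
    (hA : IsDecayMat dist ν μ A) (hA' : IsDecayMat dist ν' μ A') :
    IsDecayMat dist (ν * ν') μ (fun i j => ∑ k, A i k * A' k j) := by
  obtain ⟨a0, a1, a2⟩ := hA
  obtain ⟨b0, b1, b2⟩ := hA'
  have w : ∀ i k j, ((dist i j : ℝ) + 1) ^ μ ≤
      ((dist i k : ℝ) + 1) ^ μ * ((dist k j : ℝ) + 1) ^ μ := by
    intro i k j
    rw [← Real.mul_rpow (by positivity) (by positivity)]
    apply Real.rpow_le_rpow (by positivity) _ hμ.le
    have h : (dist i j : ℝ) ≤ dist i k + dist k j := by exact_mod_cast hdist_tri i k j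
    have h2 : (0 : ℝ) ≤ (dist i k : ℝ) * dist k j := by positivity
    nlinarith
  have key : ∀ i k j, A i k * A' k j * ((dist i j : ℝ) + 1) ^ μ ≤
      (A i k * ((dist i k : ℝ) + 1) ^ μ) * (A' k j * ((dist k j : ℝ) + 1) ^ μ) := by
    intro i k j
    have := mul_le_mul_of_nonneg_left (w i k j) (mul_nonneg (a0 i k) (b0 k j))
    linarith
  have pa : ∀ i k, 0 ≤ A i k * ((dist i k : ℝ) + 1) ^ μ := fun i k =>
    mul_nonneg (a0 i k) (by positivity)
  have pb : ∀ i k, 0 ≤ A' i k * ((dist i k : ℝ) + 1) ^ μ := fun i k =>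
    mul_nonneg (b0 i k) (by positivity)
  refine ⟨fun i j => Finset.sum_nonneg fun k _ => mul_nonneg (a0 i k) (b0 k j), ?_, ?_⟩
  · intro i
    simp only [Finset.sum_mul]
    rw [Finset.sum_comm]
    calc _ ≤ ∑ k, (A i k * ((dist i k : ℝ) + 1) ^ μ) * ν' := by
          apply Finset.sum_le_sum
          intro k _
          refine (Finset.sum_le_sum fun j _ => key i k j).trans ?_
          rw [← Finset.mul_sum]
          exact mul_le_mul_of_nonneg_left (b1 k) (pa i k)
      _ ≤ ν * ν' := by
          rw [← Finset.sum_mul]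
          exact mul_le_mul_of_nonneg_right (a1 i) hν'.le
  · intro j
    simp only [Finset.sum_mul]
    rw [Finset.sum_comm]
    calc _ ≤ ∑ k, ν * (A' k j * ((dist k j : ℝ) + 1) ^ μ) := by
          apply Finset.sum_le_sum
          intro k _
          refine (Finset.sum_le_sum fun i _ => key i k j).trans ?_
          rw [← Finset.sum_mul]
          exact mul_le_mul_of_nonneg_right (a2 k) (pb k j)
      _ ≤ ν * ν' := by
          rw [← Finset.mul_sum]
          exact mul_le_mul_of_nonneg_left (b2 j) hν.le
end
end

section
/- Let d and d' be two σ-regular probability distributions over the same finite set {1,…,M}. Then |H(d) − H(d')| ≤ σ · TV(d,d'), where H(d) = −∑_{m=1}^M d_m log d_m is the entropy. -/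
open scoped BigOperators

noncomputable section

/-- A probability distribution on a finite type. -/
def IsDist {X : Type} [Fintype X] (d : X → ℝ) : Prop :=
  (∀ x, 0 ≤ d x) ∧ ∑ x, d x = 1

/-- Total variation distance. -/
def tv {X : Type} [Fintype X] (d d' : X → ℝ) : ℝ :=
  (1 / 2) * ∑ x, |d x - d' x|

/-- A `σ`-regular distribution: positive entries with log-ratios bounded by `σ`. -/
def IsRegularDist {X : Type} (σ : ℝ) (d : X → ℝ) : Prop :=
  (∀ x, 0 < d x) ∧ ∀ x y, Real.log (d x / d y) ≤ σ

/-- The entropy `H(d) = -∑ m d_m log d_m`. -/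
def entropy {X : Type} [Fintype X] (d : X → ℝ) : ℝ :=
  -∑ x, d x * Real.log (d x)

theorem entropy_sub_le {M : ℕ} {σ : ℝ} {d d' : Fin M → ℝ}
    (hd : IsDist d) (hd' : IsDist d')
    (hreg : IsRegularDist σ d) (hreg' : IsRegularDist σ d') :
    entropy d - entropy d' ≤ σ * tv d d' := by
  have hne : Nonempty (Fin M) := by
    by_contra h
    rw [not_nonempty_iff] at h
    have := hd.2
    simp at this
  obtain ⟨m, hm⟩ := Finite.exists_min d'
  have hb : ∀ x, |Real.log (d' x) - (Real.log (d' m) + σ / 2)| ≤ σ / 2 := by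
    intro x
    have h1 := hreg'.2 x m
    rw [Real.log_div (hreg'.1 x).ne' (hreg'.1 m).ne'] at h1
    have h2 := Real.log_le_log (hreg'.1 m) (hm x)
    rw [abs_le]
    constructor <;> linarith
  set c := Real.log (d' m) + σ / 2 with hc
  have key : ∀ x, d' x * Real.log (d' x) - d x * Real.log (d x)
      ≤ σ / 2 * |d x - d' x| + (d' x - d x) * (1 + c) := by
    intro x
    have h1 : d x * Real.log (d' x) - d x * Real.log (d x) ≤ d' x - d x := by
      have h := Real.log_le_sub_one_of_pos (div_pos (hreg'.1 x) (hreg.1 x))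
      rw [Real.log_div (hreg'.1 x).ne' (hreg.1 x).ne'] at h
      have h3 := mul_le_mul_of_nonneg_left h (hreg.1 x).le
      have h4 : d x * (d' x / d x - 1) = d' x - d x := by
        have := (hreg.1 x).ne'
        field_simp
      rw [h4] at h3
      linarith
    have h2 : (d' x - d x) * (Real.log (d' x) - c) ≤ σ / 2 * |d x - d' x| := by
      calc _ ≤ |(d' x - d x) * (Real.log (d' x) - c)| := le_abs_self _
        _ = |Real.log (d' x) - c| * |d x - d' x| := by
          rw [abs_mul, mul_comm, abs_sub_comm (d' x)]
        _ ≤ _ := mul_le_mul_of_nonneg_right (hb x) (abs_nonneg _)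
    linarith
  have hs := Finset.sum_le_sum (fun x (_ : x ∈ Finset.univ) => key x)
  rw [Finset.sum_add_distrib, ← Finset.sum_mul, ← Finset.mul_sum, Finset.sum_sub_distrib,
    Finset.sum_sub_distrib, hd.2, hd'.2] at hs
  unfold entropy tv
  linarith

/-- if `d` and `d'` are `σ`-regular probability distributions on the same
finite set `{1,…,M}`, then `|H(d) - H(d')| ≤ σ · TV(d,d')`. -/
theorem stmt_7 (M : ℕ) (σ : ℝ) (d d' : Fin M → ℝ)
    (hd : IsDist d) (hd' : IsDist d')
    (hreg : IsRegularDist σ d) (hreg' : IsRegularDist σ d') :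
    |entropy d - entropy d'| ≤ σ * tv d d' := by
  rw [abs_le]
  have h1 := entropy_sub_le hd hd' hreg hreg'
  have h2 := entropy_sub_le hd' hd hreg' hreg
  have h3 : tv d' d = tv d d' := by
    unfold tv
    simp only [abs_sub_comm]
  rw [h3] at h2
  constructor <;> linarith
end
end

section
/- Let d and d' be probability distributions on {1,…,m} with strictly positive entries. Suppose that for all i,j: |log(d_i/d_j) − log(d'_i/d'_j)| ≤ ε and max(|log(d_i/d_j)|, |log(d'_i/d'_j)|) ≤ c. Then TV(d,d') ≤ (1/2) m² e^c (e^ε − 1). -/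
open scoped BigOperators

noncomputable section

/-- if `d, d'` are strictly positive probability distributions on `{1,…,m}`
such that all pairwise log-ratios of `d` and `d'` differ by at most `ε` and are bounded
in absolute value by `c`, then `TV(d,d') ≤ (1/2) m² e^c (e^ε − 1)`. -/
theorem stmt_8 (m : ℕ) (d d' : Fin m → ℝ)
    (hd : IsDist d) (hd' : IsDist d')
    (hdpos : ∀ i, 0 < d i) (hd'pos : ∀ i, 0 < d' i)
    (ε c : ℝ)
    (hε : ∀ i j, |Real.log (d i / d j) - Real.log (d' i / d' j)| ≤ ε)
    (hc : ∀ i j, |Real.log (d i / d j)| ≤ c ∧ |Real.log (d' i / d' j)| ≤ c) :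
    tv d d' ≤ (1 / 2) * (m : ℝ) ^ 2 * Real.exp c * (Real.exp ε - 1) := by
  have key : ∀ i j, d i * d' j ≤ Real.exp ε * (d' i * d j) ∧
      d' i * d j ≤ Real.exp ε * (d i * d' j) := by
    intro i j
    have h := abs_le.mp (hε i j)
    have hi := hdpos i
    have hj := hdpos j
    have hi' := hd'pos i
    have hj' := hd'pos j
    have e1 : Real.log (d i / d j) - Real.log (d' i / d' j)
        = Real.log (d i * d' j) - Real.log (d' i * d j) := by
      rw [Real.log_div hi.ne' hj.ne', Real.log_div hi'.ne' hj'.ne',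
        Real.log_mul hi.ne' hj'.ne', Real.log_mul hi'.ne' hj.ne']
      ring
    rw [e1] at h
    have p1 : 0 < d i * d' j := mul_pos hi hj'
    have p2 : 0 < d' i * d j := mul_pos hi' hj
    constructor
    · rw [← Real.exp_log p1, ← Real.exp_log p2, ← Real.exp_add]
      apply Real.exp_le_exp.mpr
      linarith [h.2]
    · rw [← Real.exp_log p1, ← Real.exp_log p2, ← Real.exp_add]
      apply Real.exp_le_exp.mpr
      linarith [h.1]
  have h1 : ∀ i, d i ≤ Real.exp ε * d' i := by
    intro i
    have h := Finset.sum_le_sum (s := Finset.univ) (fun j _ => (key i j).1)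
    simp only [← Finset.mul_sum] at h
    rwa [hd.2, hd'.2, mul_one, mul_one] at h
  have h2 : ∀ i, d' i ≤ Real.exp ε * d i := by
    intro i
    have h := Finset.sum_le_sum (s := Finset.univ) (fun j _ => (key i j).2)
    simp only [← Finset.mul_sum] at h
    rwa [hd.2, hd'.2, mul_one, mul_one] at h
  rcases Nat.eq_zero_or_pos m with hm | hm
  · subst hm
    simp [tv]
  have hε0 : 0 ≤ ε := (abs_nonneg _).trans (hε ⟨0, hm⟩ ⟨0, hm⟩)
  have hc0 : 0 ≤ c := (abs_nonneg _).trans (hc ⟨0, hm⟩ ⟨0, hm⟩).1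
  have hE : 0 ≤ Real.exp ε - 1 := by linarith [Real.one_le_exp hε0]
  have hC : 1 ≤ Real.exp c := Real.one_le_exp hc0
  have hm1 : (1 : ℝ) ≤ m := by exact_mod_cast hm
  have hle : ∀ i, d i ≤ 1 := fun i => by
    rw [← hd.2]
    exact Finset.single_le_sum (fun j _ => hd.1 j) (Finset.mem_univ i)
  have hle' : ∀ i, d' i ≤ 1 := fun i => by
    rw [← hd'.2]
    exact Finset.single_le_sum (fun j _ => hd'.1 j) (Finset.mem_univ i)
  have hb : ∀ i, |d i - d' i| ≤ Real.exp ε - 1 := by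
    intro i
    rw [abs_le]
    constructor
    · nlinarith [h2 i, mul_le_mul_of_nonneg_left (hle i) hE]
    · nlinarith [h1 i, mul_le_mul_of_nonneg_left (hle' i) hE]
  have hs : ∑ i, |d i - d' i| ≤ m * (Real.exp ε - 1) := by
    have h := Finset.sum_le_sum (s := Finset.univ) (fun i _ => hb i)
    simpa [mul_sub] using h
  have hmc : (m : ℝ) ≤ (m : ℝ) ^ 2 * Real.exp c := by
    nlinarith [mul_le_mul_of_nonneg_left hC (sq_nonneg (m : ℝ))]
  have hf := mul_le_mul_of_nonneg_right hmc hE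
  unfold tv
  linarith
end
end

section
/- Let ζ be a joint policy and define, for each agent i, the induced state-transition kernel P_i^ζ(s̄_i | s) = ∑_{a_i ∈ A_i} P_i(s̄_i | s_{N_i}, a_i) ζ_i(a_i | s). Then for every pair i,j ∈ {1,…,n}: sup_{s_{-j}} sup_{s_j, s_j'} TV( P_i^ζ(·|s_j, s_{-j}), P_i^ζ(·|s_j', s_{-j}) ) ≤ Z^ζ_{ij} + C_{ij}. -/
open scoped BigOperators

noncomputable section

namespace LPI

variable {n : ℕ} {S A : Fin n → Type}
variable [∀ i, Fintype (S i)] [∀ i, Fintype (A i)]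
variable [∀ i, DecidableEq (S i)] [∀ i, DecidableEq (A i)]
variable [∀ i, Nonempty (S i)] [∀ i, Nonempty (A i)]

/-- The state-transition kernel of agent `i` induced by policy `ζ`:
`P_i^ζ(s̄_i | s) = ∑_{a_i} P_i(s̄_i | s, a_i) ζ_i(a_i | s)`. -/
def PziKer {n : ℕ} {S A : Fin n → Type}
    [∀ i, Fintype (S i)] [∀ i, Fintype (A i)]
    (P : ∀ i : Fin n, (∀ j, S j) → A i → S i → ℝ)
    (ζ : ∀ i : Fin n, (∀ j, S j) → A i → ℝ)
    (i : Fin n) (s : ∀ j, S j) (si' : S i) : ℝ :=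
  ∑ ai : A i, P i s ai si' * ζ i s ai

theorem tv_mix_le {X Y : Type} [Fintype X] [Fintype Y] (p q : X → Y → ℝ) (u v : X → ℝ) (c : ℝ)
    (hp : ∀ a, IsDist (p a)) (hv : IsDist v) (hc : ∀ a, tv (p a) (q a) ≤ c) :
    tv (fun y => ∑ a, p a y * u a) (fun y => ∑ a, q a y * v a) ≤ tv u v + c := by
  have h1 : ∀ y, |∑ a, p a y * u a - ∑ a, q a y * v a| ≤
      ∑ a, (p a y * |u a - v a| + v a * |p a y - q a y|) := by
    intro y
    rw [← Finset.sum_sub_distrib]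
    refine (Finset.abs_sum_le_sum_abs _ _).trans (Finset.sum_le_sum fun a _ => ?_)
    have e : p a y * u a - q a y * v a = p a y * (u a - v a) + v a * (p a y - q a y) := by ring
    rw [e]
    refine (abs_add_le _ _).trans (le_of_eq ?_)
    rw [abs_mul, abs_mul, abs_of_nonneg ((hp a).1 y), abs_of_nonneg (hv.1 a)]
  have h2 : ∑ y, ∑ a, (p a y * |u a - v a| + v a * |p a y - q a y|) =
      ∑ a, (|u a - v a| + v a * (2 * tv (p a) (q a))) := by
    rw [Finset.sum_comm]
    refine Finset.sum_congr rfl fun a _ => ?_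
    rw [Finset.sum_add_distrib, ← Finset.sum_mul, (hp a).2, ← Finset.mul_sum]
    unfold tv
    ring
  have h3 : ∑ a, v a * (2 * tv (p a) (q a)) ≤ 2 * c := by
    calc ∑ a, v a * (2 * tv (p a) (q a)) ≤ ∑ a, v a * (2 * c) :=
          Finset.sum_le_sum fun a _ =>
            mul_le_mul_of_nonneg_left (by linarith [hc a]) (hv.1 a)
      _ = 2 * c := by rw [← Finset.sum_mul, hv.2, one_mul]
  have h4 := Finset.sum_le_sum fun y (_ : y ∈ Finset.univ) => h1 y
  rw [h2, Finset.sum_add_distrib] at h4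
  unfold tv at h3 h4 ⊢
  linarith

theorem le_fin_iSup {ι : Type} [Finite ι] (f : ι → ℝ) (x : ι) : f x ≤ ⨆ y, f y :=
  le_ciSup (Set.finite_range f).bddAbove x

/-- for the induced state-transition kernels `P_i^ζ`, varying the state of
a single agent `j` changes `P_i^ζ(·|s)` by at most `Z^ζ_{ij} + C_{ij}` in total variation. -/
theorem stmt_9 {n : ℕ} (G : SimpleGraph (Fin n)) [DecidableRel G.Adj]
    (S A : Fin n → Type)
    [∀ i, Fintype (S i)] [∀ i, Fintype (A i)]
    [∀ i, DecidableEq (S i)] [∀ i, DecidableEq (A i)]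
    [∀ i, Nonempty (S i)] [∀ i, Nonempty (A i)]
    (P : ∀ i : Fin n, (∀ j, S j) → A i → S i → ℝ)
    (hP : IsKernel P) (hPloc : IsLocalKernel G P)
    (ζ : ∀ i : Fin n, (∀ j, S j) → A i → ℝ) (hζ : IsPolicy ζ) :
    ∀ (i j : Fin n) (s : ∀ k, S k) (sj' : S j),
      tv (PziKer P ζ i s) (PziKer P ζ i (Function.update s j sj')) ≤
        Zpol ζ i j + Cmat G P i j := by
  intro i j s sj'
  have hZ : tv (ζ i s) (ζ i (Function.update s j sj')) ≤ Zpol ζ i j :=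
    (le_fin_iSup (fun sj : S j => tv (ζ i s) (ζ i (Function.update s j sj))) sj').trans
      (le_fin_iSup (fun s : ∀ k, S k =>
        ⨆ sj : S j, tv (ζ i s) (ζ i (Function.update s j sj))) s)
  have hC : ∀ a, tv (P i s a) (P i (Function.update s j sj') a) ≤ Cmat G P i j := by
    intro a
    unfold Cmat
    split_ifs with h1 h2
    · subst h1
      refine le_trans ?_ (le_fin_iSup _ s)
      refine le_trans ?_ (le_fin_iSup _ sj')
      refine le_trans ?_ (le_fin_iSup _ a)
      exact le_fin_iSup (fun a' => tv (P j s a) (P j (Function.update s j sj') a')) a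
    · refine le_trans ?_ (le_fin_iSup _ s)
      refine le_trans ?_ (le_fin_iSup _ sj')
      exact le_fin_iSup (fun a => tv (P i s a) (P i (Function.update s j sj') a)) a
    · have e : P i s a = P i (Function.update s j sj') a := by
        refine hPloc i _ _ (fun k hk => ?_) a
        have hkj : k ≠ j := by
          rintro rfl
          exact hk.elim h1 h2
        rw [Function.update_of_ne hkj]
      rw [← e]
      simp [tv]
  have := tv_mix_le (P i s) (P i (Function.update s j sj')) (ζ i s)
    (ζ i (Function.update s j sj')) _ (hP i s) (hζ i _) hC
  exact this.trans (by linarith)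

end LPI
end
end

section
/- Suppose there exists a joint policy ζ_b such that the induced transition matrix P_{ζ_b} on S is irreducible and aperiodic, and fix δ > 0. Then every ζ ∈ Π_δ admits a unique stationary distribution μ^ζ, and μ_min := inf_{ζ ∈ Π_δ} min_{s ∈ S} μ^ζ(s) > 0. -/
open scoped BigOperators

noncomputable section

namespace LPI

variable {n : ℕ} {S A : Fin n → Type}
variable [∀ i, Fintype (S i)] [∀ i, Fintype (A i)]
variable [∀ i, DecidableEq (S i)] [∀ i, DecidableEq (A i)]
variable [∀ i, Nonempty (S i)] [∀ i, Nonempty (A i)]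

/-- Invariance under powers. -/
theorem aux_pow {X : Type} [Fintype X] [DecidableEq X] (M : Matrix X X ℝ) (v : X → ℝ)
    (h : Matrix.vecMul v M = v) (t : ℕ) : Matrix.vecMul v (M ^ t) = v := by
  induction t with
  | zero => simp
  | succ k ih => rw [pow_succ, ← Matrix.vecMul_vecMul, ih, h]

theorem aux_pow_nonneg {X : Type} [Fintype X] [DecidableEq X] (M : Matrix X X ℝ)
    (h : ∀ x y, 0 ≤ M x y) (t : ℕ) : ∀ x y, 0 ≤ (M ^ t) x y := by
  induction t with
  | zero => intro x y; rw [pow_zero, Matrix.one_apply]; split_ifs <;> norm_num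
  | succ k ih =>
    intro x y
    rw [pow_succ, Matrix.mul_apply]
    exact Finset.sum_nonneg fun z _ => mul_nonneg (ih x z) (h z y)

theorem aux_pow_le {X : Type} [Fintype X] [DecidableEq X] (M B : Matrix X X ℝ) (δ : ℝ)
    (hδ : 0 ≤ δ) (hB : ∀ x y, 0 ≤ B x y) (h : ∀ x y, δ * B x y ≤ M x y) (t : ℕ) :
    ∀ x y, δ ^ t * (B ^ t) x y ≤ (M ^ t) x y := by
  have hM : ∀ x y, 0 ≤ M x y := fun x y => (mul_nonneg hδ (hB x y)).trans (h x y)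
  induction t with
  | zero => intro x y; simp
  | succ k ih =>
    intro x y
    rw [pow_succ M, pow_succ B, Matrix.mul_apply, Matrix.mul_apply, Finset.mul_sum]
    refine Finset.sum_le_sum fun z _ => ?_
    calc δ ^ (k+1) * ((B ^ k) x z * B z y) = (δ ^ k * (B ^ k) x z) * (δ * B z y) := by ring
      _ ≤ (M ^ k) x z * M z y :=
        mul_le_mul (ih x z) (h z y) (mul_nonneg hδ (hB z y)) (aux_pow_nonneg M hM k x z)

/-- For a nonnegative invariant vector, the mass at `y` dominates what arrives from `x`. -/
theorem aux_lower {X : Type} [Fintype X] [DecidableEq X] (M : Matrix X X ℝ) (v : X → ℝ)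
    (hM : ∀ x y, 0 ≤ M x y) (hv : ∀ x, 0 ≤ v x)
    (h : Matrix.vecMul v M = v) (t : ℕ) (x y : X) : v x * (M ^ t) x y ≤ v y := by
  conv_rhs => rw [← aux_pow M v h t]
  exact Finset.single_le_sum (f := fun z => v z * (M ^ t) z y)
    (fun z _ => mul_nonneg (hv z) (aux_pow_nonneg M hM t z y)) (Finset.mem_univ x)

theorem aux_exists {X : Type} [Fintype X] [DecidableEq X] [Nonempty X] (M : Matrix X X ℝ)
    (hM : ∀ x, IsDist (M x)) : ∃ μ, IsStationary M μ := by
  have h1 : (M - 1).det = 0 := by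
    rw [← Matrix.exists_mulVec_eq_zero_iff]
    refine ⟨fun _ => 1, fun h => ?_, ?_⟩
    · have := congrFun h (Classical.arbitrary X)
      norm_num at this
    · rw [Matrix.sub_mulVec, Matrix.one_mulVec]
      ext x
      simp [Matrix.mulVec, dotProduct, (hM x).2]
  obtain ⟨v, hv0, hv⟩ := Matrix.exists_vecMul_eq_zero_iff.mpr h1
  rw [Matrix.vecMul_sub, Matrix.vecMul_one, sub_eq_zero] at hv
  have hle : ∀ y, |v y| ≤ ∑ x, |v x| * M x y := by
    intro y
    conv_lhs => rw [← hv]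
    refine (Finset.abs_sum_le_sum_abs _ _).trans (le_of_eq ?_)
    refine Finset.sum_congr rfl fun x _ => ?_
    rw [abs_mul, abs_of_nonneg ((hM x).1 y)]
  have hsum : ∑ y, |v y| = ∑ y, ∑ x, |v x| * M x y := by
    rw [Finset.sum_comm]
    refine Finset.sum_congr rfl fun x _ => ?_
    rw [← Finset.mul_sum, (hM x).2, mul_one]
  have heq := (Finset.sum_eq_sum_iff_of_le (fun y _ => hle y)).mp hsum
  have hpos : 0 < ∑ x, |v x| := by
    obtain ⟨x, hx⟩ := Function.ne_iff.mp hv0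
    exact Finset.sum_pos' (fun _ _ => abs_nonneg _) ⟨x, Finset.mem_univ x, abs_pos.mpr hx⟩
  refine ⟨fun x => |v x| / ∑ z, |v z|, ⟨fun x => by positivity, ?_⟩, ?_⟩
  · rw [← Finset.sum_div, div_self hpos.ne']
  · ext y
    have := heq y (Finset.mem_univ y)
    simp only [Matrix.vecMul, dotProduct]
    conv_rhs => rw [this]
    rw [Finset.sum_div]
    exact Finset.sum_congr rfl fun x _ => by ring

theorem aux_unique {X : Type} [Fintype X] [DecidableEq X] [Nonempty X] (M : Matrix X X ℝ)
    (hM : ∀ x y, 0 ≤ M x y) (hirr : MatIrreducible M) (μ ν : X → ℝ)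
    (hμ : IsStationary M μ) (hν : IsStationary M ν) (hpos : ∀ x, 0 < ν x) : μ = ν := by
  obtain ⟨x0, hx0⟩ := Finite.exists_min (fun x => μ x / ν x)
  set c := μ x0 / ν x0 with hc
  have hnn : ∀ x, 0 ≤ (μ - c • ν) x := by
    intro x
    have := (le_div_iff₀ (hpos x)).mp (hx0 x)
    simpa using this
  have hst : Matrix.vecMul (μ - c • ν) M = μ - c • ν := by
    rw [Matrix.sub_vecMul, Matrix.smul_vecMul, hμ.2, hν.2]
  have hz0 : (μ - c • ν) x0 = 0 := by
    simp [hc, div_mul_cancel₀ _ (hpos x0).ne']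
  have hz : ∀ x, μ x = c * ν x := by
    intro x
    obtain ⟨t, -, ht⟩ := hirr x x0
    have h := aux_lower M _ hM hnn hst t x x0
    rw [hz0] at h
    have h2 : (μ - c • ν) x ≤ 0 := by
      by_contra hcon
      exact absurd h (not_le.mpr (mul_pos (not_le.mp hcon) ht))
    have h3 := le_antisymm h2 (hnn x)
    simpa [sub_eq_zero] using h3
  have hc1 : c = 1 := by
    have h := hμ.1.2
    simp only [hz, ← Finset.mul_sum, hν.1.2, mul_one] at h
    exact h
  ext x
  rw [hz, hc1, one_mul]

theorem aux_prod_dist {n : ℕ} {Y : Fin n → Type} [∀ i, Fintype (Y i)]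
    [∀ i, DecidableEq (Y i)] (f : ∀ i, Y i → ℝ) (hf : ∀ i, IsDist (f i)) :
    IsDist (fun y : ∀ i, Y i => ∏ i, f i (y i)) := by
  refine ⟨fun y => Finset.prod_nonneg fun i _ => (hf i).1 _, ?_⟩
  rw [← Fintype.prod_sum]
  simp [(hf _).2]

theorem aux_Pmat_dist {n : ℕ} {S A : Fin n → Type}
    [∀ i, Fintype (S i)] [∀ i, Fintype (A i)]
    [∀ i, DecidableEq (S i)] [∀ i, DecidableEq (A i)]
    (P : ∀ i : Fin n, (∀ j, S j) → A i → S i → ℝ) (hP : IsKernel P)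
    (ζ : ∀ i : Fin n, (∀ j, S j) → A i → ℝ) (hζ : IsPolicy ζ) (s : ∀ j, S j) :
    IsDist (Pmat P ζ s) := by
  have hj := aux_prod_dist (fun i => ζ i s) (fun i => hζ i s)
  have hg := fun a : ∀ i, A i => aux_prod_dist (fun i => P i s (a i)) (fun i => hP i s (a i))
  refine ⟨fun s' => Finset.sum_nonneg fun a _ => mul_nonneg (hj.1 a) ((hg a).1 s'), ?_⟩
  change ∑ s', ∑ a : ∀ i, A i, jprob ζ s a * Pglob P s a s' = 1
  rw [Finset.sum_comm, ← hj.2]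
  refine Finset.sum_congr rfl fun a _ => ?_
  rw [← Finset.mul_sum]
  have := (hg a).2
  unfold Pglob jprob
  rw [this, mul_one]

theorem aux_Pmat_le {n : ℕ} {S A : Fin n → Type}
    [∀ i, Fintype (S i)] [∀ i, Fintype (A i)]
    [∀ i, DecidableEq (S i)] [∀ i, DecidableEq (A i)]
    (P : ∀ i : Fin n, (∀ j, S j) → A i → S i → ℝ) (hP : IsKernel P)
    (ζb ζ : ∀ i : Fin n, (∀ j, S j) → A i → ℝ) (hζb : IsPolicy ζb)
    (δ : ℝ) (hδ : 0 < δ) (h : ∀ s a, δ ≤ jprob ζ s a) (s s' : ∀ j, S j) :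
    δ * Pmat P ζb s s' ≤ Pmat P ζ s s' := by
  change δ * ∑ a : ∀ i, A i, jprob ζb s a * Pglob P s a s' ≤
    ∑ a : ∀ i, A i, jprob ζ s a * Pglob P s a s'
  rw [Finset.mul_sum]
  refine Finset.sum_le_sum fun a _ => ?_
  have hj := aux_prod_dist (fun i => ζb i s) (fun i => hζb i s)
  have hg : 0 ≤ Pglob P s a s' :=
    (aux_prod_dist (fun i => P i s (a i)) (fun i => hP i s (a i))).1 s'
  have h1 : jprob ζb s a ≤ 1 := by
    rw [← hj.2]
    exact Finset.single_le_sum (fun b _ => hj.1 b) (Finset.mem_univ a)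
  rw [← mul_assoc]
  refine mul_le_mul_of_nonneg_right (le_trans ?_ (h s a)) hg
  exact mul_le_of_le_one_right hδ.le h1

/-- if some joint policy `ζ_b` induces an irreducible and aperiodic chain,
then every `ζ ∈ Π_δ` admits a unique stationary distribution `μ^ζ`, and
`μ_min = inf_{ζ ∈ Π_δ} min_s μ^ζ(s) > 0`. -/
theorem stmt_17 {n : ℕ} (G : SimpleGraph (Fin n))
    (S A : Fin n → Type)
    [∀ i, Fintype (S i)] [∀ i, Fintype (A i)]
    [∀ i, DecidableEq (S i)] [∀ i, DecidableEq (A i)]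
    [∀ i, Nonempty (S i)] [∀ i, Nonempty (A i)]
    (P : ∀ i : Fin n, (∀ j, S j) → A i → S i → ℝ)
    (hP : IsKernel P) (hPloc : IsLocalKernel G P)
    (ζb : ∀ i : Fin n, (∀ j, S j) → A i → ℝ) (hζb : IsPolicy ζb)
    (hirr : MatIrreducible (Pmat P ζb)) (hap : MatAperiodic (Pmat P ζb))
    (δ : ℝ) (hδ : 0 < δ) :
    (∀ ζ : ∀ i : Fin n, (∀ j, S j) → A i → ℝ, IsPolicy ζ →
      (∀ s a, δ ≤ jprob ζ s a) →
      ∃! μ : (∀ j, S j) → ℝ, IsStationary (Pmat P ζ) μ) ∧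
    (∃ ε : ℝ, 0 < ε ∧
      ∀ ζ : ∀ i : Fin n, (∀ j, S j) → A i → ℝ, IsPolicy ζ →
        (∀ s a, δ ≤ jprob ζ s a) →
        ∀ μ : (∀ j, S j) → ℝ, IsStationary (Pmat P ζ) μ → ∀ s, ε ≤ μ s) := by
  have hb0 : ∀ x y, 0 ≤ Pmat P ζb x y := fun x => (aux_Pmat_dist P hP ζb hζb x).1
  have hε : ∃ ε : ℝ, 0 < ε ∧
      ∀ ζ : ∀ i : Fin n, (∀ j, S j) → A i → ℝ, IsPolicy ζ →
        (∀ s a, δ ≤ jprob ζ s a) →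
        ∀ μ : (∀ j, S j) → ℝ, IsStationary (Pmat P ζ) μ → ∀ s, ε ≤ μ s := by
    choose T hT1 hT using hirr
    obtain ⟨p, hp⟩ := Finite.exists_min
      (fun p : (∀ j, S j) × (∀ j, S j) => δ ^ T p.1 p.2 * (Pmat P ζb ^ T p.1 p.2) p.1 p.2)
    have hη := mul_pos (pow_pos hδ (T p.1 p.2)) (hT p.1 p.2)
    set η := δ ^ T p.1 p.2 * (Pmat P ζb ^ T p.1 p.2) p.1 p.2 with hηdef
    have hcard : (0 : ℝ) < Fintype.card (∀ j, S j) := by exact_mod_cast Fintype.card_pos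
    refine ⟨η / Fintype.card (∀ j, S j), div_pos hη hcard, ?_⟩
    intro ζ hζ hζδ μ hμ s
    have h0 : ∀ x y, 0 ≤ Pmat P ζ x y := fun x => (aux_Pmat_dist P hP ζ hζ x).1
    have key : ∀ x, μ x * η ≤ μ s := fun x => by
      refine le_trans (mul_le_mul_of_nonneg_left ?_ (hμ.1.1 x))
        (aux_lower _ μ h0 hμ.1.1 hμ.2 (T x s) x s)
      exact (hp (x, s)).trans
        (aux_pow_le _ _ δ hδ.le hb0 (aux_Pmat_le P hP ζb ζ hζb δ hδ hζδ) (T x s) x s)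
    have hs := Finset.sum_le_sum fun x (_ : x ∈ Finset.univ) => key x
    rw [← Finset.sum_mul, hμ.1.2, one_mul, Finset.sum_const, Finset.card_univ, nsmul_eq_mul] at hs
    rw [div_le_iff₀ hcard]
    linarith
  refine ⟨fun ζ hζ hζδ => ?_, hε⟩
  obtain ⟨ε, hε0, hε⟩ := hε
  obtain ⟨ν, hν⟩ := aux_exists (Pmat P ζ) (aux_Pmat_dist P hP ζ hζ)
  refine ⟨ν, hν, fun μ hμ => ?_⟩
  refine aux_unique (Pmat P ζ) (fun x => (aux_Pmat_dist P hP ζ hζ x).1) ?_ μ ν hμ hν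
    fun x => hε0.trans_le (hε ζ hζ hζδ ν hν x)
  intro x y
  obtain ⟨t, ht1, ht⟩ := hirr x y
  exact ⟨t, ht1, (mul_pos (pow_pos hδ t) ht).trans_le
    (aux_pow_le _ _ δ hδ.le hb0 (aux_Pmat_le P hP ζb ζ hζb δ hδ hζδ) t x y)⟩

end LPI
end
end
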